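/- There is an absolute constant c > 0 such that for all ε, δ, p ∈ (0,1] the following holds. Let G be a graph of density at least p and let P₀ be an equipartition of V(G) of order at most 1/ε. Then there exists a graph G' on V(G) with |E(G) △ E(G')| ≤ δ|E(G)| such that G' has an ε-regular equipartition refining P₀ whose order is at most twr_{1/ε}(c·log(1/p)/δ²). -/

import Mathlib

/-!
Write `n = |V|` and `M = 2|E(G)|`, and identify `G` with its adjacency indicator `F` on `V × V`.

The engine is an entropy increment. For a vertex partition `g`, the potential `∑ a log a`, with `a`
the average of `F` over the cells of `g × g`, lies between `M log (M / n²) ≥ -M log (1 / p)` and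
`0`. Repeatedly refine a partition `f` to a partition `g` by weak (Frieze–Kannan) regularity with an
accuracy depending on the size of `f`. Within `O(log (1 / p) / δ²)` steps there is one at which the
potential grows by at most `δ² M / 16`. By a Pinsker-type inequality (`sum_abs_avg_sub_sq_le`) the
averages over `f` and `g` then differ by at most `δ M / 2` in `L¹`. Rescaling `F` on every cell of
`g` so that its mean becomes the average over the cell of `f` (`tilt`) gives a `[0,1]`-valued weight
`W` at `L¹` distance at most `δ M / 2` from `F` which is very close in cut norm to a function that
is constant on the cells of `f` (`exists_tilt`).

A derandomised Chernoff argument (`graph_rounding`) turns `W` into a graph `G'` with the same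
properties, up to errors negligible for large `n`. Splitting every part of `P₀` into many equal
pieces, most of which lie inside a class of `f` (`exists_split`), gives an equipartition for which
closeness in cut norm is `ε`-regularity (`exists_regular_of_tilt`). Every step costs two
exponentials (`growth`), whence the height of the tower.

Two cases are treated separately: if `n` is below the tower, the partition into singletons works;
and if adding at most `δ |E|` edges makes `G` complete, the complete graph is used. In the remaining
case `p (1 + δ) ≤ 1`, so `log (1 / p) / δ²` is at least `1 / (2 δ)`.
-/

open Finset
open scoped Classical

/-- `eCnt G A B` is the number of ordered pairs `(u,v) ∈ A × B` with `uv` an edge of `G`. -/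
noncomputable def eCnt {V : Type*} [Fintype V] (G : SimpleGraph V) (A B : Finset V) : ℕ :=
  ((A ×ˢ B).filter fun p => G.Adj p.1 p.2).card

/-- The edge density `d_G(A,B)` between vertex subsets `A` and `B`. -/
noncomputable def dens {V : Type*} [Fintype V] (G : SimpleGraph V) (A B : Finset V) : ℝ :=
  eCnt G A B / (A.card * B.card)

/-- The pair `(A,B)` is `ε`-regular. -/
def RegPair {V : Type*} [Fintype V] (G : SimpleGraph V) (ε : ℝ) (A B : Finset V) : Prop :=
  ∀ A' ⊆ A, ∀ B' ⊆ B, ε * A.card ≤ A'.card → ε * B.card ≤ B'.card →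
    |dens G A B - dens G A' B'| ≤ ε

/-- The density `d_G = 2|E|/|V|²` of a graph. -/
noncomputable def graphDensity {V : Type*} [Fintype V] (G : SimpleGraph V) : ℝ :=
  2 * G.edgeSet.ncard / (Fintype.card V : ℝ) ^ 2

/-- The number of ordered pairs of parts of `P` that are not `ε`-regular. -/
noncomputable def irregCount {V : Type*} [Fintype V] [DecidableEq V] (G : SimpleGraph V)
    (ε : ℝ) (P : Finpartition (univ : Finset V)) : ℕ :=
  ((P.parts ×ˢ P.parts).filter fun pq => ¬ RegPair G ε pq.1 pq.2).card

/-- A partition of the vertex set is an `ε`-regular partition if all but at most `ε k²`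
of the ordered pairs of its parts are `ε`-regular. -/
def IsRegularPartition {V : Type*} [Fintype V] [DecidableEq V] (G : SimpleGraph V)
    (ε : ℝ) (P : Finpartition (univ : Finset V)) : Prop :=
  (irregCount G ε P : ℝ) ≤ ε * (P.parts.card : ℝ) ^ 2

/-- `twrAt y x` is a tower of `x` exponents with `y` at the top. -/
noncomputable def twrAt (y : ℝ) : ℕ → ℝ
  | 0 => y
  | n + 1 => (2 : ℝ) ^ twrAt y n

/-! ### Averages over partitions and tilting -/

/-- The average of `F` over the cell of `ω` in the partition of `Ω` into the fibres of `g`.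
Partitions are encoded by labelling functions throughout. -/
noncomputable def avg {Ω κ : Type*} [Fintype Ω] (g : Ω → κ) (F : Ω → ℝ) (ω : Ω) : ℝ :=
  (∑ ω' with g ω' = g ω, F ω') / (#{ω' | g ω' = g ω} : ℝ)

section Avg
variable {Ω κ ι : Type*} [Fintype Ω] {g : Ω → κ} {f : Ω → ι} {F : Ω → ℝ}

lemma avg_congr {ω ω' : Ω} (h : g ω = g ω') : avg g F ω = avg g F ω' := by
  simp only [avg, h]

lemma cell_card_pos (g : Ω → κ) (ω : Ω) : (0 : ℝ) < (#{ω' | g ω' = g ω} : ℝ) := by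
  exact_mod_cast Finset.card_pos.2 ⟨ω, by simp⟩

/-- Averaging is self-adjoint: it may be dropped against a weight that is constant on cells. -/
lemma sum_mul_avg {c : Ω → ℝ} (hc : ∀ ω ω', g ω = g ω' → c ω = c ω') :
    ∑ ω, c ω * avg g F ω = ∑ ω, c ω * F ω := by
  have h1 : ∀ ω, c ω * avg g F ω =
      ∑ ω', if g ω' = g ω then c ω' * F ω' / (#{ω'' | g ω'' = g ω'} : ℝ) else 0 := by
    intro ω
    rw [← Finset.sum_filter, avg, Finset.sum_div, Finset.mul_sum]
    refine Finset.sum_congr rfl fun ω' h => ?_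
    have h' : g ω' = g ω := by simpa using h
    rw [hc ω' ω h', h']
    ring
  simp only [h1]
  rw [Finset.sum_comm]
  refine Finset.sum_congr rfl fun ω' _ => ?_
  have h2 : (∑ ω, if g ω' = g ω then c ω' * F ω' / (#{ω'' | g ω'' = g ω'} : ℝ) else 0)
      = (#{ω | g ω = g ω'} : ℝ) * (c ω' * F ω' / (#{ω'' | g ω'' = g ω'} : ℝ)) := by
    rw [← Finset.sum_filter, Finset.sum_const, nsmul_eq_mul]
    simp only [eq_comm]
  rw [h2]
  have := cell_card_pos g ω'
  field_simp

lemma avg_nonneg (hF : ∀ ω, 0 ≤ F ω) (ω : Ω) : 0 ≤ avg g F ω :=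
  div_nonneg (Finset.sum_nonneg fun _ _ => hF _) (cell_card_pos g ω).le

lemma avg_le_one (hF : ∀ ω, F ω ≤ 1) (ω : Ω) : avg g F ω ≤ 1 := by
  rw [avg, div_le_one (cell_card_pos g ω)]
  calc _ ≤ ∑ ω' with g ω' = g ω, (1 : ℝ) := Finset.sum_le_sum fun _ _ => hF _
    _ = _ := by simp

lemma sum_avg : ∑ ω, avg g F ω = ∑ ω, F ω := by
  simpa using sum_mul_avg (g := g) (F := F) (c := fun _ => 1) (fun _ _ _ => rfl)

/-- Pythagoras for a partition `g` refining `f`: the squared `L²` distance of the averages is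
the increment of the energy. -/
lemma sum_avg_sub_sq (hr : ∀ ω ω', g ω = g ω' → f ω = f ω') :
    ∑ ω, (avg g F ω - avg f F ω) ^ 2 = ∑ ω, avg g F ω ^ 2 - ∑ ω, avg f F ω ^ 2 := by
  have h1 : ∑ ω, avg f F ω * avg g F ω = ∑ ω, avg f F ω * F ω :=
    sum_mul_avg fun ω ω' h => avg_congr (hr _ _ h)
  have h2 : ∑ ω, avg f F ω * avg f F ω = ∑ ω, avg f F ω * F ω :=
    sum_mul_avg fun ω ω' h => avg_congr h
  have h3 : ∀ ω, (avg g F ω - avg f F ω) ^ 2 = avg g F ω ^ 2 - avg f F ω ^ 2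
      - 2 * (avg f F ω * avg g F ω - avg f F ω * avg f F ω) := fun ω => by ring
  simp only [h3, Finset.sum_sub_distrib, ← Finset.mul_sum, h1, h2]
  ring

/-- Pointwise form of the bound of the squared Hellinger distance by relative entropy. The
hypothesis `hab` is absolute continuity; without it `Real.log 0 = 0` would falsify the bound. -/
lemma hellinger_le {a b : ℝ} (ha : 0 ≤ a) (hb : 0 ≤ b) (hab : b = 0 → a = 0) :
    (√a - √b) ^ 2 ≤ a * Real.log a - a * Real.log b - a + b := by
  rcases hb.eq_or_lt with h0 | hb
  · simp [← h0, hab h0.symm]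
  rcases ha.eq_or_lt with h0 | ha
  · simp [← h0, hb.le]
  have sa := Real.sqrt_pos.2 ha
  have sb := Real.sqrt_pos.2 hb
  have h := Real.log_le_sub_one_of_pos (div_pos sb sa)
  rw [Real.log_div sb.ne' sa.ne', Real.log_sqrt hb.le, Real.log_sqrt ha.le] at h
  have e1 := Real.sq_sqrt ha.le
  have e2 := Real.sq_sqrt hb.le
  have h' : a * (Real.log b / 2 - Real.log a / 2) ≤ √a * √b - a := by
    calc _ ≤ a * (√b / √a - 1) := by gcongr
      _ = _ := by
        nth_rewrite 1 [← e1]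
        field_simp
        linear_combination -e1
  nlinarith

/-- Pinsker-type inequality for a partition `g` refining `f`: the squared `L¹` distance of the
averages is at most `4 ∑ F` times the increment of `∑ a log a`. The factor `∑ F`, rather than
the size of `Ω`, is what makes the argument efficient for sparse graphs. -/
lemma sum_abs_avg_sub_sq_le (hr : ∀ ω ω', g ω = g ω' → f ω = f ω') (hF : ∀ ω, 0 ≤ F ω) :
    (∑ ω, |avg g F ω - avg f F ω|) ^ 2 ≤ 4 * (∑ ω, F ω) *
      (∑ ω, avg g F ω * Real.log (avg g F ω) - ∑ ω, avg f F ω * Real.log (avg f F ω)) := by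
  set a := avg g F with ha
  set b := avg f F with hb
  have a0 : ∀ ω, 0 ≤ a ω := avg_nonneg hF
  have b0 : ∀ ω, 0 ≤ b ω := avg_nonneg hF
  have hab : ∀ ω, b ω = 0 → a ω = 0 := by
    intro ω h
    rw [hb, avg, div_eq_zero_iff, or_iff_left (cell_card_pos f ω).ne',
      Finset.sum_eq_zero_iff_of_nonneg fun _ _ => hF _] at h
    rw [ha, avg, Finset.sum_eq_zero, zero_div]
    intro ω' h'
    exact h ω' (by simpa using hr _ _ (by simpa using h'))
  have e1 : ∑ ω, Real.log (b ω) * a ω = ∑ ω, Real.log (b ω) * b ω := by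
    rw [ha, sum_mul_avg fun ω ω' h => by rw [hb, avg_congr (hr _ _ h)]]
    conv_rhs => rw [hb]
    rw [sum_mul_avg fun ω ω' h => by rw [avg_congr h]]
  have sa : ∑ ω, a ω = ∑ ω, F ω := sum_avg
  have sb : ∑ ω, b ω = ∑ ω, F ω := sum_avg
  have hD : ∑ ω, (√(a ω) - √(b ω)) ^ 2 ≤
      ∑ ω, a ω * Real.log (a ω) - ∑ ω, b ω * Real.log (b ω) := by
    calc _ ≤ ∑ ω, (a ω * Real.log (a ω) - Real.log (b ω) * a ω - a ω + b ω) :=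
          Finset.sum_le_sum fun ω _ => by
            have := hellinger_le (a0 ω) (b0 ω) (hab ω)
            linarith
      _ = _ := by
        rw [Finset.sum_add_distrib, Finset.sum_sub_distrib, Finset.sum_sub_distrib, e1, sa, sb]
        simp only [mul_comm (Real.log _)]
        ring
  have hS : ∑ ω, (√(a ω) + √(b ω)) ^ 2 ≤ 4 * ∑ ω, F ω := by
    calc _ ≤ ∑ ω, (2 * a ω + 2 * b ω) := Finset.sum_le_sum fun ω _ => by
            nlinarith [Real.sq_sqrt (a0 ω), Real.sq_sqrt (b0 ω), sq_nonneg (√(a ω) - √(b ω))]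
      _ = _ := by
        rw [Finset.sum_add_distrib, ← Finset.mul_sum, ← Finset.mul_sum, sa, sb]; ring
  calc (∑ ω, |a ω - b ω|) ^ 2 = (∑ ω, |√(a ω) - √(b ω)| * (√(a ω) + √(b ω))) ^ 2 := by
        congr 1
        refine Finset.sum_congr rfl fun ω _ => ?_
        have : 0 ≤ √(a ω) + √(b ω) := by positivity
        rw [← abs_of_nonneg this, ← abs_mul]
        congr 1
        nlinarith [Real.sq_sqrt (a0 ω), Real.sq_sqrt (b0 ω)]
    _ ≤ (∑ ω, |√(a ω) - √(b ω)| ^ 2) * ∑ ω, (√(a ω) + √(b ω)) ^ 2 :=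
        Finset.sum_mul_sq_le_sq_mul_sq _ _ _
    _ = (∑ ω, (√(a ω) - √(b ω)) ^ 2) * ∑ ω, (√(a ω) + √(b ω)) ^ 2 := by simp only [sq_abs]
    _ ≤ (∑ ω, a ω * Real.log (a ω) - ∑ ω, b ω * Real.log (b ω)) * (4 * ∑ ω, F ω) := by
        gcongr
        exact (Finset.sum_nonneg fun _ _ => sq_nonneg _).trans hD
    _ = _ := by ring
end Avg

/-- The factor by which `F` (when the target `t` is at most the mean `a`), respectively `1 - F`
(when `t > a`), is scaled on a cell in order to change its mean from `a` to `t`. If `a = t = 0`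
the value is the junk `0 / 0 = 0`, which is harmless as then `F` vanishes on the cell. -/
noncomputable def tiltCoeff (t a : ℝ) : ℝ := if t ≤ a then t / a else (1 - t) / (1 - a)

/-- The modification of `F` that, on each cell of the finer partition `g`, has mean equal to the
average of `F` over the surrounding cell of `f`, obtained by scaling `F` or `1 - F` down. -/
noncomputable def tilt {Ω κ ι : Type*} [Fintype Ω] (g : Ω → κ) (f : Ω → ι) (F : Ω → ℝ) (ω : Ω) :
    ℝ :=
  avg f F ω + tiltCoeff (avg f F ω) (avg g F ω) * (F ω - avg g F ω)

lemma tiltCoeff_nonneg {t a : ℝ} (ht : 0 ≤ t) (ht1 : t ≤ 1) : 0 ≤ tiltCoeff t a := by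
  unfold tiltCoeff
  split_ifs with h
  · exact div_nonneg ht (ht.trans h)
  · exact div_nonneg (by linarith) (by linarith)

lemma tiltCoeff_le_one {t a : ℝ} (ht : 0 ≤ t) (ht1 : t ≤ 1) : tiltCoeff t a ≤ 1 := by
  unfold tiltCoeff
  split_ifs with h
  · exact div_le_one_of_le₀ h (ht.trans h)
  · exact div_le_one_of_le₀ (by linarith) (by linarith)

lemma tilt_aux {t a x : ℝ} (ht : 0 ≤ t) (ht1 : t ≤ 1) :
    t + tiltCoeff t a * (x - a) =
      if t ≤ a then tiltCoeff t a * x else 1 - tiltCoeff t a * (1 - x) := by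
  unfold tiltCoeff
  split_ifs with h
  · rcases (ht.trans h).eq_or_lt with h0 | h0
    · have : t = 0 := by linarith
      simp [this]
    · field_simp; ring
  · have : 0 < 1 - a := by linarith
    field_simp; ring

section Tilt
variable {Ω κ ι : Type*} [Fintype Ω] {g : Ω → κ} {f : Ω → ι} {F : Ω → ℝ}

lemma tilt_mem (h0 : ∀ ω, 0 ≤ F ω) (h1 : ∀ ω, F ω ≤ 1) (ω : Ω) :
    0 ≤ tilt g f F ω ∧ tilt g f F ω ≤ 1 := by
  have ht := avg_nonneg (g := f) h0 ω
  have ht1 := avg_le_one (g := f) h1 ω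
  have c0 := tiltCoeff_nonneg (a := avg g F ω) ht ht1
  have c1 := tiltCoeff_le_one (a := avg g F ω) ht ht1
  have x0 := h0 ω
  have x1 := h1 ω
  rw [tilt, tilt_aux ht ht1]
  split_ifs
  · exact ⟨by positivity, mul_le_one₀ c1 x0 x1⟩
  · have := mul_le_one₀ c1 (sub_nonneg.2 x1) (by linarith)
    have := mul_nonneg c0 (sub_nonneg.2 x1)
    constructor <;> linarith

/-- Tilting changes `F` monotonically on every cell of `g`, so its `L¹` cost is exactly the `L¹`
distance between the two averages. -/
lemma sum_abs_tilt_sub (hr : ∀ ω ω', g ω = g ω' → f ω = f ω')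
    (h0 : ∀ ω, 0 ≤ F ω) (h1 : ∀ ω, F ω ≤ 1) :
    ∑ ω, |tilt g f F ω - F ω| = ∑ ω, |avg g F ω - avg f F ω| := by
  set a := avg g F with ha
  set t := avg f F with ht
  have t0 : ∀ ω, 0 ≤ t ω := avg_nonneg h0
  have t1 : ∀ ω, t ω ≤ 1 := avg_le_one h1
  -- the change is `c₁ F + c₂ (1 - F)` with `c₁, c₂` constant on the cells of `g`
  set c₁ : Ω → ℝ := fun ω => if t ω ≤ a ω then 1 - tiltCoeff (t ω) (a ω) else 0 with hc₁
  set c₂ : Ω → ℝ := fun ω => if t ω ≤ a ω then 0 else 1 - tiltCoeff (t ω) (a ω) with hc₂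
  have m1 : ∑ ω, c₁ ω * a ω = ∑ ω, c₁ ω * F ω := sum_mul_avg fun ω ω' h => by
    simp only [hc₁, ha, ht, avg_congr h, avg_congr (hr _ _ h)]
  have m2 : ∑ ω, c₂ ω * a ω = ∑ ω, c₂ ω * F ω := sum_mul_avg fun ω ω' h => by
    simp only [hc₂, ha, ht, avg_congr h, avg_congr (hr _ _ h)]
  have e1 : ∀ ω, |tilt g f F ω - F ω| = c₁ ω * F ω + (c₂ ω - c₂ ω * F ω) := by
    intro ω
    have cc := tiltCoeff_le_one (a := a ω) (t0 ω) (t1 ω)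
    rw [tilt, tilt_aux (t0 ω) (t1 ω)]
    simp only [hc₁, hc₂]
    simp only [← ha]
    split_ifs with h
    · rw [abs_of_nonpos (by nlinarith [h0 ω])]; ring
    · rw [abs_of_nonneg (by nlinarith [h1 ω])]; ring
  have e2 : ∀ ω, |a ω - t ω| = c₁ ω * a ω + (c₂ ω - c₂ ω * a ω) := by
    intro ω
    have := tilt_aux (a := a ω) (x := a ω) (t0 ω) (t1 ω)
    simp only [hc₁, hc₂]
    split_ifs with h
    · rw [if_pos h] at this
      rw [abs_of_nonneg (by linarith)]; linarith
    · rw [if_neg h] at this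
      rw [abs_of_neg (by linarith)]; linarith
  simp only [e1, e2, Finset.sum_add_distrib, Finset.sum_sub_distrib, m1, m2]
end Tilt

/-! ### Weak regularity and the entropy increment -/

section Cells
variable {V : Type}

/-- The cell of an ordered pair in the product partition induced on `V × V` by the vertex
partition `g`. -/
def cell {κ : Type} (g : V → κ) (ω : V × V) : κ × κ := (g ω.1, g ω.2)

lemma cell_refines {κ ι : Type} {g : V → κ} {f : V → ι} (hr : ∀ x y, g x = g y → f x = f y)
    (ω ω' : V × V) (h : cell g ω = cell g ω') : cell f ω = cell f ω' := by
  simp only [cell, Prod.mk.injEq] at h ⊢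
  exact ⟨hr _ _ h.1, hr _ _ h.2⟩

variable [Fintype V]

lemma avg_cell_swap {κ : Type} (g : V → κ) {F : V × V → ℝ} (hF : ∀ ω, F ω.swap = F ω)
    (ω : V × V) : avg (cell g) F ω.swap = avg (cell g) F ω := by
  have key : ∀ H : V × V → ℝ, (∀ ω, H ω.swap = H ω) →
      ∑ ω' with cell g ω' = cell g ω.swap, H ω' = ∑ ω' with cell g ω' = cell g ω, H ω' := by
    intro H hH
    rw [Finset.sum_filter, Finset.sum_filter, ← (Equiv.prodComm V V).sum_comp]
    refine Finset.sum_congr rfl fun ω' _ => ?_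
    simp only [Equiv.prodComm_apply, hH, cell, Prod.fst_swap, Prod.snd_swap, Prod.mk.injEq]
    simp only [and_comm]
  have h2 := key (fun _ => 1) fun _ => rfl
  simp only [Finset.sum_const, nsmul_eq_mul, mul_one] at h2
  unfold avg
  congr 1
  · convert key F hF
  · convert h2 <;> rfl

lemma tilt_cell_swap {κ ι : Type} (g : V → κ) (f : V → ι) {F : V × V → ℝ}
    (hF : ∀ ω, F ω.swap = F ω) (ω : V × V) :
    tilt (cell g) (cell f) F ω.swap = tilt (cell g) (cell f) F ω := by
  simp only [tilt, avg_cell_swap _ hF, hF]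

/-- If a rectangle `S × T` witnesses that the tilted function is not close to the `f`-average in
cut norm, then refining `g` by `S` and `T` increases the energy by more than `η² |V|²`. On the
rectangle the discrepancy is a `g`-measurable multiple of `F - avg g F`, so Cauchy–Schwarz
applies. -/
lemma energy_step {ι κ : Type} {f : V → ι} {g : V → κ} (hr : ∀ x y, g x = g y → f x = f y)
    {F : V × V → ℝ} (h0 : ∀ ω, 0 ≤ F ω)
    (h1 : ∀ ω, F ω ≤ 1) {η : ℝ} (hη : 0 < η) (S T : Finset V)
    (hST : η * Fintype.card (V × V) <
      |∑ ω ∈ S ×ˢ T, (tilt (cell g) (cell f) F ω - avg (cell f) F ω)|) :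
    ∑ ω, avg (cell g) F ω ^ 2 + η ^ 2 * Fintype.card (V × V) <
      ∑ ω, avg (cell fun x => (g x, decide (x ∈ S), decide (x ∈ T))) F ω ^ 2 := by
  set g' : V → κ × Bool × Bool := fun x => (g x, decide (x ∈ S), decide (x ∈ T)) with hg'
  have hg : ∀ x y, g' x = g' y → g x = g y := fun x y h => congrArg Prod.fst h
  set c : V × V → ℝ := fun ω => if ω ∈ S ×ˢ T then
    tiltCoeff (avg (cell f) F ω) (avg (cell g) F ω) else 0 with hc
  have cm : ∀ ω ω', cell g' ω = cell g' ω' → c ω = c ω' := by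
    intro ω ω' h
    have hgg := cell_refines hg _ _ h
    simp only [cell, hg', Prod.mk.injEq, decide_eq_decide] at h
    simp only [hc, Finset.mem_product, h.1.2.1, h.2.2.2, avg_congr hgg,
      avg_congr (cell_refines hr _ _ hgg)]
  have c1 : ∀ ω, c ω ^ 2 ≤ 1 := by
    intro ω
    have ht := avg_nonneg (g := cell f) h0 ω
    have ht1 := avg_le_one (g := cell f) h1 ω
    have := tiltCoeff_nonneg (a := avg (cell g) F ω) ht ht1
    have := tiltCoeff_le_one (a := avg (cell g) F ω) ht ht1
    simp only [hc]
    split_ifs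
    · nlinarith
    · norm_num
  have e : ∑ ω ∈ S ×ˢ T, (tilt (cell g) (cell f) F ω - avg (cell f) F ω) =
      ∑ ω, c ω * (avg (cell g') F ω - avg (cell g) F ω) := by
    simp only [mul_sub, Finset.sum_sub_distrib (fun ω => c ω * avg (cell g') F ω)]
    rw [sum_mul_avg cm, ← Finset.sum_sub_distrib, ← Finset.sum_subset (Finset.subset_univ (S ×ˢ T))]
    · refine Finset.sum_congr rfl fun ω hω => ?_
      simp only [hc, if_pos hω, tilt]
      ring
    · intro ω _ hω
      simp only [hc, if_neg hω]
      ring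
  have cs := Finset.sum_mul_sq_le_sq_mul_sq univ c
    (fun ω => avg (cell g') F ω - avg (cell g) F ω)
  rw [sum_avg_sub_sq (cell_refines hg), ← e, ← sq_abs] at cs
  have cb : ∑ ω, c ω ^ 2 ≤ (Fintype.card (V × V) : ℝ) := by
    calc _ ≤ ∑ ω : V × V, (1 : ℝ) := Finset.sum_le_sum fun ω _ => c1 ω
      _ = _ := by simp
  have gn : 0 ≤ ∑ ω, avg (cell g') F ω ^ 2 - ∑ ω, avg (cell g) F ω ^ 2 := by
    rw [← sum_avg_sub_sq (cell_refines hg)]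
    exact Finset.sum_nonneg fun _ _ => sq_nonneg _
  have cs' := cs.trans (mul_le_mul_of_nonneg_right cb gn)
  have n0 : (0 : ℝ) ≤ Fintype.card (V × V) := Nat.cast_nonneg _
  have hlt : (η * Fintype.card (V × V)) ^ 2 < (Fintype.card (V × V) : ℝ) *
      (∑ ω, avg (cell g') F ω ^ 2 - ∑ ω, avg (cell g) F ω ^ 2) :=
    lt_of_lt_of_le (by gcongr) cs'
  have npos : (0 : ℝ) < Fintype.card (V × V) := by
    rcases n0.eq_or_lt with h | h
    · rw [← h] at hlt; simp at hlt
    · exact h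
  have : (Fintype.card (V × V) : ℝ) * (η ^ 2 * Fintype.card (V × V)) <
      (Fintype.card (V × V) : ℝ) *
      (∑ ω, avg (cell g') F ω ^ 2 - ∑ ω, avg (cell g) F ω ^ 2) := by
    calc _ = (η * Fintype.card (V × V)) ^ 2 := by ring
      _ < _ := hlt
  have := lt_of_mul_lt_mul_left this n0
  linarith

lemma energy_le {κ : Type} (g : V → κ) {F : V × V → ℝ} (h0 : ∀ ω, 0 ≤ F ω)
    (h1 : ∀ ω, F ω ≤ 1) : ∑ ω, avg (cell g) F ω ^ 2 ≤ (Fintype.card (V × V) : ℝ) := by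
  calc _ ≤ ∑ ω : V × V, (1 : ℝ) := Finset.sum_le_sum fun ω _ =>
        pow_le_one₀ (avg_nonneg h0 ω) (avg_le_one h1 ω)
    _ = _ := by simp

/-- Weak (Frieze–Kannan) regularity by energy increment: if the energy of `g` is within
`N η² |V|²` of its upper bound `|V|²`, some partition refining `f`, with at most `4 ^ N` times as
many labels as `g`, makes the tilt towards the `f`-average `η`-close to that average in cut norm. -/
lemma weak_regularity {ι : Type} (f : V → ι) {F : V × V → ℝ} (h0 : ∀ ω, 0 ≤ F ω)
    (h1 : ∀ ω, F ω ≤ 1) {η : ℝ} (hη : 0 < η) (N : ℕ) :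
    ∀ (κ : Type) (_ : Fintype κ) (g : V → κ), (∀ x y, g x = g y → f x = f y) →
      (Fintype.card (V × V) : ℝ) - ∑ ω, avg (cell g) F ω ^ 2
        ≤ N * (η ^ 2 * Fintype.card (V × V)) →
      ∃ (κ' : Type) (_ : Fintype κ') (g' : V → κ'), (∀ x y, g' x = g' y → f x = f y) ∧
        Fintype.card κ' ≤ Fintype.card κ * 4 ^ N ∧
        ∀ S T : Finset V, |∑ ω ∈ S ×ˢ T, (tilt (cell g') (cell f) F ω - avg (cell f) F ω)|
          ≤ η * Fintype.card (V × V) := by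
  have n0 : (0 : ℝ) ≤ Fintype.card (V × V) := Nat.cast_nonneg _
  induction N with
  | zero =>
    intro κ _ g hr hE
    by_contra! hcon
    obtain ⟨S, T, hST⟩ := hcon κ inferInstance g hr (by simp)
    have h2 := energy_step hr h0 h1 hη S T hST
    have h3 := energy_le (fun x => (g x, decide (x ∈ S), decide (x ∈ T))) h0 h1
    have : 0 ≤ η ^ 2 * (Fintype.card (V × V) : ℝ) := by positivity
    simp only [Nat.cast_zero, zero_mul] at hE
    linarith
  | succ N ih =>
    intro κ _ g hr hE
    by_cases hgood : ∀ S T : Finset V,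
        |∑ ω ∈ S ×ˢ T, (tilt (cell g) (cell f) F ω - avg (cell f) F ω)|
          ≤ η * Fintype.card (V × V)
    · exact ⟨κ, inferInstance, g, hr, Nat.le_mul_of_pos_right _ (by positivity), hgood⟩
    push Not at hgood
    obtain ⟨S, T, hST⟩ := hgood
    have h2 := energy_step hr h0 h1 hη S T hST
    obtain ⟨κ', _, g', hr', hc, hg⟩ := ih (κ × Bool × Bool) inferInstance
      (fun x => (g x, decide (x ∈ S), decide (x ∈ T)))
      (fun x y h => hr _ _ (congrArg Prod.fst h)) (by
        push_cast at hE
        linarith)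
    refine ⟨κ', inferInstance, g', hr', hc.trans (le_of_eq ?_), hg⟩
    simp only [Fintype.card_prod, Fintype.card_bool]
    ring

/-- The potential `∑ a log a`, where `a` is the average of `F` over the cells of `g` (the negative
of an entropy, hence increasing under refinement). -/
noncomputable def entropy {κ : Type} (g : V → κ) (F : V × V → ℝ) : ℝ :=
  ∑ ω, avg (cell g) F ω * Real.log (avg (cell g) F ω)

lemma entropy_nonpos {κ : Type} (g : V → κ) {F : V × V → ℝ} (h0 : ∀ ω, 0 ≤ F ω)
    (h1 : ∀ ω, F ω ≤ 1) : entropy g F ≤ 0 :=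
  Finset.sum_nonpos fun ω _ => mul_nonpos_of_nonneg_of_nonpos (avg_nonneg h0 ω)
    (Real.log_nonpos (avg_nonneg h0 ω) (avg_le_one h1 ω))

lemma entropy_unit {F : V × V → ℝ} :
    entropy (fun _ : V => ()) F =
      (∑ ω, F ω) * Real.log ((∑ ω, F ω) / Fintype.card (V × V)) := by
  have h : ∀ ω, avg (cell fun _ : V => ()) F ω = (∑ ω, F ω) / Fintype.card (V × V) := by
    intro ω
    simp [avg, cell]
  rw [entropy]
  calc _ = ∑ ω, avg (cell fun _ : V => ()) F ω *
        Real.log ((∑ ω, F ω) / Fintype.card (V × V)) :=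
        Finset.sum_congr rfl fun ω _ => by rw [h]
    _ = _ := by rw [← Finset.sum_mul, sum_avg]

/-- Entropy-increment step. Starting from the trivial partition, weak regularity is applied
repeatedly. The potential starts at `(∑ F) log ((∑ F) / |V|²)` and is never positive, so one of the
first `T` steps gains at most `θ`; the tilt at that step costs little in `L¹` and is close in cut
norm to a function constant on the cells of a partition with at most `Y T` labels. -/
lemma exists_tilt {F : V × V → ℝ} (h0 : ∀ ω, 0 ≤ F ω) (h1 : ∀ ω, F ω ≤ 1)
    (hs : ∀ ω, F ω.swap = F ω) {Y : ℕ → ℝ} (hY0 : 1 ≤ Y 0) (hYm : Monotone Y) {η : ℕ → ℝ}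
    (hη : ∀ k, 0 < η k)
    (hY : ∀ k i : ℕ, (k : ℝ) ≤ Y i → (k : ℝ) * 4 ^ ⌈1 / η k ^ 2⌉₊ ≤ Y (i + 1))
    {θ : ℝ} {T : ℕ}
    (hT : -((∑ ω, F ω) * Real.log ((∑ ω, F ω) / Fintype.card (V × V))) < T * θ) :
    ∃ (ι : Type) (_ : Fintype ι) (f : V → ι) (W : V × V → ℝ), (Fintype.card ι : ℝ) ≤ Y T ∧
      (∀ ω, 0 ≤ W ω) ∧ (∀ ω, W ω ≤ 1) ∧ (∀ ω, W ω.swap = W ω) ∧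
      (∑ ω, |W ω - F ω|) ^ 2 ≤ 4 * (∑ ω, F ω) * θ ∧
      ∀ A B : Finset V, |∑ ω ∈ A ×ˢ B, (W ω - avg (cell f) F ω)| ≤
        η (Fintype.card ι) * Fintype.card (V × V) := by
  by_contra hcon
  have key : ∀ i ≤ T, ∃ (ι : Type) (_ : Fintype ι) (f : V → ι), (Fintype.card ι : ℝ) ≤ Y i ∧
      entropy (fun _ : V => ()) F + i * θ ≤ entropy f F := by
    intro i
    induction i with
    | zero => exact fun _ => ⟨Unit, inferInstance, fun _ => (), by simpa using hY0, by simp⟩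
    | succ i ih =>
      intro hi
      obtain ⟨ι, _, f, hc, he⟩ := ih (by omega)
      have hηk := hη (Fintype.card ι)
      obtain ⟨κ, _, g, hr, hcg, hcut⟩ := weak_regularity f h0 h1 hηk
        ⌈1 / η (Fintype.card ι) ^ 2⌉₊ ι inferInstance f (fun _ _ h => h) (by
          have a1 : (0 : ℝ) ≤ ∑ ω, avg (cell f) F ω ^ 2 :=
            Finset.sum_nonneg fun _ _ => sq_nonneg _
          have a2 : 1 ≤ (⌈1 / η (Fintype.card ι) ^ 2⌉₊ : ℝ) * η (Fintype.card ι) ^ 2 := by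
            rw [← div_le_iff₀ (by positivity)]
            exact Nat.le_ceil _
          have a3 := mul_le_mul_of_nonneg_right a2
            (Nat.cast_nonneg (Fintype.card (V × V)) : (0 : ℝ) ≤ _)
          linarith)
      refine ⟨κ, inferInstance, g, ?_, ?_⟩
      · refine le_trans ?_ (hY _ _ hc)
        exact_mod_cast hcg
      · by_contra! hlt
        refine hcon ⟨ι, inferInstance, f, tilt (cell g) (cell f) F,
          hc.trans (hYm (by omega)), fun ω => (tilt_mem h0 h1 ω).1, fun ω => (tilt_mem h0 h1 ω).2,
          tilt_cell_swap g f hs, ?_, hcut⟩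
        rw [sum_abs_tilt_sub (cell_refines hr) h0 h1]
        refine (sum_abs_avg_sub_sq_le (cell_refines hr) h0).trans ?_
        have : 0 ≤ ∑ ω, F ω := Finset.sum_nonneg fun _ _ => h0 _
        gcongr
        change entropy g F - entropy f F ≤ θ
        push_cast at hlt
        linarith
  obtain ⟨ι, _, f, -, he⟩ := key T le_rfl
  rw [entropy_unit] at he
  have := entropy_nonpos f h0 h1
  linarith

end Cells

/-! ### Rounding weights to graphs -/

lemma exp_le_quadratic {x : ℝ} (h : |x| ≤ 1) : Real.exp x ≤ 1 + x + x ^ 2 := by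
  have := (abs_le.1 (Real.abs_exp_sub_one_sub_id_le h)).2
  linarith

/-- Moment generating function of a centred Bernoulli variable. -/
lemma bernoulli_mgf {w f l : ℝ} (w0 : 0 ≤ w) (w1 : w ≤ 1) (hf : |f| ≤ l) (hl : l ≤ 1) :
    w * Real.exp (f * (1 - w)) + (1 - w) * Real.exp (f * (0 - w)) ≤ Real.exp (l ^ 2) := by
  have f1 := hf.trans hl
  have a1 : |f * (1 - w)| ≤ 1 := by
    rw [abs_mul]
    exact mul_le_one₀ f1 (abs_nonneg _) (by rw [abs_of_nonneg] <;> linarith)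
  have a2 : |f * (0 - w)| ≤ 1 := by
    rw [abs_mul]
    exact mul_le_one₀ f1 (abs_nonneg _) (by rw [abs_of_nonpos] <;> linarith)
  have b1 := mul_le_mul_of_nonneg_left (exp_le_quadratic a1) w0
  have b2 := mul_le_mul_of_nonneg_left (exp_le_quadratic a2) (sub_nonneg.2 w1)
  have hsq : f ^ 2 ≤ l ^ 2 := by
    rw [← sq_abs]
    gcongr
  have b3 := Real.add_one_le_exp (l ^ 2)
  have b4 : f ^ 2 * (w * (1 - w)) ≤ f ^ 2 * 1 := by
    gcongr
    nlinarith
  nlinarith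

/-- A `[0,1]`-valued `w` can be rounded to a `{0,1}`-valued `X` so that all linear tests are
nearly preserved. This is the Chernoff bound, derandomised by the method of conditional
expectations applied to the sum of the exponential moments. -/
lemma rounding {I J : Type*} [Fintype I] [Fintype J] {w : I → ℝ} (w0 : ∀ i, 0 ≤ w i)
    (w1 : ∀ i, w i ≤ 1) {f : J → I → ℝ} {l : ℝ} (hl : l ≤ 1) (hf : ∀ j i, |f j i| ≤ l) :
    ∃ X : I → ℝ, (∀ i, X i = 0 ∨ X i = 1) ∧
      ∀ j, ∑ i, f j i * (X i - w i) ≤ Real.log (Fintype.card J) + Fintype.card I * l ^ 2 := by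
  have key : ∀ s : Finset I, ∃ X : I → ℝ, (∀ i, X i = 0 ∨ X i = 1) ∧
      ∑ j, Real.exp (∑ i ∈ s, f j i * (X i - w i)) ≤ Fintype.card J * Real.exp (l ^ 2) ^ #s := by
    intro s
    induction s using Finset.induction_on with
    | empty => exact ⟨fun _ => 0, fun _ => Or.inl rfl, by simp⟩
    | insert a s ha ih =>
      obtain ⟨X, hX, hb⟩ := ih
      set E : J → ℝ := fun j => Real.exp (∑ i ∈ s, f j i * (X i - w i)) with hE
      have upd : ∀ v : ℝ, ∀ j,
          Real.exp (∑ i ∈ insert a s, f j i * (Function.update X a v i - w i)) =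
            E j * Real.exp (f j a * (v - w a)) := by
        intro v j
        rw [Finset.sum_insert ha, Real.exp_add, mul_comm, Function.update_self]
        congr 2
        refine Finset.sum_congr rfl fun i hi => ?_
        rw [Function.update_of_ne (ne_of_mem_of_not_mem hi ha)]
      have hupd : ∀ v : ℝ, (v = 0 ∨ v = 1) → ∀ i, Function.update X a v i = 0 ∨
          Function.update X a v i = 1 := by
        intro v hv i
        rcases eq_or_ne i a with rfl | h
        · simpa using hv
        · simpa [Function.update_of_ne h] using hX i
      have mean : w a * ∑ j, E j * Real.exp (f j a * (1 - w a)) +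
          (1 - w a) * ∑ j, E j * Real.exp (f j a * (0 - w a)) ≤
          Fintype.card J * Real.exp (l ^ 2) ^ #(insert a s) := by
        rw [Finset.card_insert_of_notMem ha, pow_succ, ← mul_assoc, Finset.mul_sum,
          Finset.mul_sum, ← Finset.sum_add_distrib]
        calc _ ≤ ∑ j, E j * Real.exp (l ^ 2) := Finset.sum_le_sum fun j _ => by
              have := mul_le_mul_of_nonneg_left (bernoulli_mgf (w0 a) (w1 a) (hf j a) hl)
                (Real.exp_nonneg _ : 0 ≤ E j)
              linarith
          _ = (∑ j, E j) * Real.exp (l ^ 2) := by rw [Finset.sum_mul]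
          _ ≤ _ := by gcongr
      -- one of the two choices does not exceed the mean
      rcases le_total (∑ j, E j * Real.exp (f j a * (1 - w a)))
        (∑ j, E j * Real.exp (f j a * (0 - w a))) with h | h
      · refine ⟨Function.update X a 1, hupd 1 (Or.inr rfl), ?_⟩
        simp only [upd]
        have := mul_le_mul_of_nonneg_left h (sub_nonneg.2 (w1 a))
        linarith
      · refine ⟨Function.update X a 0, hupd 0 (Or.inl rfl), ?_⟩
        simp only [upd]
        have := mul_le_mul_of_nonneg_left h (w0 a)
        linarith
  obtain ⟨X, hX, hb⟩ := key univ
  refine ⟨X, hX, fun j => ?_⟩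
  have : Nonempty J := ⟨j⟩
  have hJ : (0 : ℝ) < Fintype.card J := by exact_mod_cast Fintype.card_pos
  have h1 : Real.exp (∑ i, f j i * (X i - w i)) ≤
      Fintype.card J * Real.exp (l ^ 2) ^ #(univ : Finset I) :=
    le_trans (Finset.single_le_sum (f := fun j => Real.exp (∑ i, f j i * (X i - w i)))
      (fun _ _ => Real.exp_nonneg _) (Finset.mem_univ j)) hb
  rw [← Real.le_log_iff_exp_le (by positivity), Real.log_mul hJ.ne' (by positivity),
    Real.log_pow, Real.log_exp] at h1
  simpa using h1

/-- The indicator function of adjacency, on ordered pairs of vertices. -/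
noncomputable def adjInd {V : Type} (G : SimpleGraph V) (ω : V × V) : ℝ :=
  if G.Adj ω.1 ω.2 then 1 else 0

/-- Rounding of a symmetric weight to a graph. The rounding is done on unordered pairs, each of
which carries at most two ordered pairs, whence the normalisation `l / 2`; each test is used with
both signs. -/
lemma graph_rounding {V J : Type} [Fintype V] [Fintype J] [Nonempty J] {W : V × V → ℝ}
    (W0 : ∀ ω, 0 ≤ W ω)
    (W1 : ∀ ω, W ω ≤ 1) (Ws : ∀ ω, W ω.swap = W ω) {c : J → V × V → ℝ} (hc : ∀ j ω, |c j ω| ≤ 1)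
    {l : ℝ} (l0 : 0 < l) (l1 : l ≤ 1) :
    ∃ G : SimpleGraph V, ∀ j, |∑ ω with ω.1 ≠ ω.2, c j ω * (adjInd G ω - W ω)| ≤
      2 * ((Real.log (2 * Fintype.card J) + (Fintype.card V : ℝ) ^ 2 * l ^ 2) / l) := by
  set w : Sym2 V → ℝ := Sym2.lift ⟨fun x y => W (x, y), fun x y => (Ws (x, y)).symm⟩ with hw
  set φ : V × V → Sym2 V := fun ω => s(ω.1, ω.2) with hφ
  set sg : Bool → ℝ := fun b => if b then 1 else -1 with hsg
  set F : J × Bool → Sym2 V → ℝ := fun jb e =>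
    sg jb.2 * (l / 2 * ∑ ω with ω.1 ≠ ω.2 ∧ φ ω = e, c jb.1 ω) with hF
  have w0 : ∀ e, 0 ≤ w e := fun e => Sym2.ind (fun x y => W0 (x, y)) e
  have w1 : ∀ e, w e ≤ 1 := fun e => Sym2.ind (fun x y => W1 (x, y)) e
  have hFl : ∀ jb e, |F jb e| ≤ l := by
    rintro ⟨j, b⟩ e
    have s1 : |sg b| = 1 := by cases b <;> simp [hsg]
    have s2 : |∑ ω with ω.1 ≠ ω.2 ∧ φ ω = e, c j ω| ≤ 2 := by
      refine (Finset.abs_sum_le_sum_abs _ _).trans ?_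
      refine (Finset.sum_le_card_nsmul _ _ 1 fun ω _ => hc j ω).trans ?_
      have : #{ω : V × V | ω.1 ≠ ω.2 ∧ φ ω = e} ≤ 2 := by
        induction e using Sym2.ind with
        | _ x y =>
        refine (Finset.card_le_card (t := {(x, y), (y, x)}) ?_).trans Finset.card_le_two
        intro ω hω
        simp only [hφ, Finset.mem_filter, Sym2.eq_iff] at hω
        simp only [Finset.mem_insert, Finset.mem_singleton, Prod.ext_iff]
        exact hω.2.2
      simpa using this
    simp only [hF]
    rw [abs_mul, s1, one_mul, abs_mul, abs_of_pos (by positivity)]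
    nlinarith
  obtain ⟨X, hX, hb⟩ := rounding w0 w1 l1 hFl
  obtain ⟨G, hG⟩ : ∃ G : SimpleGraph V, ∀ x y, G.Adj x y ↔ x ≠ y ∧ X s(x, y) = 1 :=
    ⟨{  Adj := fun x y => x ≠ y ∧ X s(x, y) = 1
        symm := ⟨fun x y h => ⟨h.1.symm, by rw [Sym2.eq_swap]; exact h.2⟩⟩
        loopless := ⟨fun x h => h.1 rfl⟩ }, fun _ _ => Iff.rfl⟩
  refine ⟨G, fun j => ?_⟩
  set D := ∑ ω with ω.1 ≠ ω.2, c j ω * (X (φ ω) - w (φ ω)) with hD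
  have e1 : ∑ ω with ω.1 ≠ ω.2, c j ω * (adjInd G ω - W ω) = D := by
    refine Finset.sum_congr rfl fun ω hω => ?_
    have hne : ω.1 ≠ ω.2 := by simpa using hω
    congr 2
    rcases hX (φ ω) with h | h
    · have h' : X s(ω.1, ω.2) = 0 := h
      simp [adjInd, hG, h, h']
    · have h' : X s(ω.1, ω.2) = 1 := h
      simp [adjInd, hG, h, h', hne]
  have e2 : ∀ b, ∑ e, F (j, b) e * (X e - w e) = sg b * (l / 2 * D) := by
    intro b
    have : D = ∑ e, ∑ ω with ω.1 ≠ ω.2 ∧ φ ω = e, c j ω * (X e - w e) := by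
      rw [hD, ← Finset.sum_fiberwise _ φ]
      refine Finset.sum_congr rfl fun e _ => ?_
      rw [Finset.filter_filter]
      refine Finset.sum_congr rfl fun ω hω => ?_
      rw [(Finset.mem_filter.1 hω).2.2]
    rw [this, Finset.mul_sum, Finset.mul_sum]
    refine Finset.sum_congr rfl fun e _ => ?_
    simp only [hF, ← Finset.sum_mul]
    ring
  rw [e1]
  have hI : (Fintype.card (Sym2 V) : ℝ) ≤ (Fintype.card V : ℝ) ^ 2 := by
    have := Fintype.card_le_of_surjective φ (fun e => Sym2.ind (fun x y => ⟨(x, y), rfl⟩) e)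
    rw [Fintype.card_prod, ← sq] at this
    exact_mod_cast this
  have hI2 : (Fintype.card (Sym2 V) : ℝ) * l ^ 2 ≤ (Fintype.card V : ℝ) ^ 2 * l ^ 2 := by gcongr
  have b1 := hb (j, true)
  have b2 := hb (j, false)
  rw [e2] at b1 b2
  simp only [hsg, Fintype.card_prod, Fintype.card_bool] at b1 b2
  push_cast at b1 b2
  rw [mul_comm (Fintype.card J : ℝ)] at b1 b2
  have hfin : |l / 2 * D| ≤ Real.log (2 * Fintype.card J) + (Fintype.card V : ℝ) ^ 2 * l ^ 2 := by
    rw [abs_le]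
    constructor
    · simp at b2; linarith
    · simp at b1; linarith
  rw [abs_mul, abs_of_pos (by positivity)] at hfin
  rw [← mul_div_assoc, le_div_iff₀ l0]
  linarith

/-! ### Counting edges, splitting parts, regular pairs -/

section Counting
variable {V : Type} [Fintype V]

lemma sum_adjInd (G : SimpleGraph V) : ∑ ω, adjInd G ω = 2 * (G.edgeSet.ncard : ℝ) := by
  have h := G.sum_degrees_eq_twice_card_edges
  rw [← SimpleGraph.coe_edgeFinset G, Set.ncard_coe_finset]
  have h2 : ∑ ω, adjInd G ω = ((∑ v, G.degree v : ℕ) : ℝ) := by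
    rw [Fintype.sum_prod_type]
    push_cast
    refine Finset.sum_congr rfl fun x _ => ?_
    simp only [adjInd]
    rw [Finset.sum_boole, ← SimpleGraph.card_neighborFinset_eq_degree,
      SimpleGraph.neighborFinset_eq_filter]
  rw [h2, h]
  push_cast
  rfl

lemma ncard_symmDiff_edgeSet (G G' : SimpleGraph V) :
    2 * ((symmDiff G.edgeSet G'.edgeSet).ncard : ℝ) = ∑ ω, |adjInd G' ω - adjInd G ω| := by
  have h : symmDiff G.edgeSet G'.edgeSet = (symmDiff G G').edgeSet := by
    simp only [symmDiff, SimpleGraph.edgeSet_sup, SimpleGraph.edgeSet_sdiff]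
    rfl
  rw [h, ← sum_adjInd]
  refine Finset.sum_congr rfl fun ω _ => ?_
  simp only [adjInd, symmDiff, SimpleGraph.sup_adj, SimpleGraph.sdiff_adj]
  by_cases h1 : G.Adj ω.1 ω.2 <;> by_cases h2 : G'.Adj ω.1 ω.2 <;> simp [h1, h2]

lemma eCnt_eq_sum (G : SimpleGraph V) (A B : Finset V) :
    (eCnt G A B : ℝ) = ∑ ω ∈ A ×ˢ B, adjInd G ω := by
  simp [eCnt, adjInd, Finset.sum_boole]

end Counting

section Split
variable {V κ : Type} [Fintype V] [DecidableEq V] [Fintype κ]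

/-- A set can be cut into pieces of sizes `m` and `m + 1`, all but `card κ` of which are
monochromatic for `f`. -/
lemma exists_split_part (f : V → κ) (A : Finset V) {a b m : ℕ} (hm : m ≠ 0)
    (h : a * m + b * (m + 1) = #A) :
    ∃ Q : Finpartition A, (∀ B ∈ Q.parts, #B = m ∨ #B = m + 1) ∧ #Q.parts = a + b ∧
      #{B ∈ Q.parts | ¬ ∀ x ∈ B, ∀ y ∈ B, f x = f y} ≤ Fintype.card κ := by
  set P : Finpartition A := Finpartition.ofSetSetoid (Setoid.ker f) A with hP
  have hpure : ∀ t ∈ P.parts, ∃ k, t = {x ∈ A | f x = k} := by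
    intro t ht
    simp only [hP, Finpartition.ofSetSetoid, Finset.mem_image] at ht
    obtain ⟨x, hx, rfl⟩ := ht
    refine ⟨f x, ?_⟩
    ext y
    simp [eq_comm]
  have hPc : #P.parts ≤ Fintype.card κ := by
    calc #P.parts ≤ #((univ : Finset κ).image fun k => {x ∈ A | f x = k}) :=
          Finset.card_le_card fun t ht => by
            obtain ⟨k, hk⟩ := hpure t ht
            exact Finset.mem_image.2 ⟨k, Finset.mem_univ _, hk.symm⟩
      _ ≤ Fintype.card κ := Finset.card_image_le
  set Q := P.equitabilise h with hQ
  have hsz : ∀ B ∈ Q.parts, #B = m ∨ #B = m + 1 :=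
    fun B hB => Finpartition.card_eq_of_mem_parts_equitabilise hB
  refine ⟨Q, hsz, P.card_parts_equitabilise h hm, ?_⟩
  set I := {B ∈ Q.parts | ¬ ∀ x ∈ B, ∀ y ∈ B, f x = f y} with hI
  have hIsub : I ⊆ Q.parts := Finset.filter_subset _ _
  have c1 : #I * m ≤ #(I.biUnion id) := by
    rw [Finset.card_biUnion fun x hx y hy hxy => Q.disjoint (hIsub hx) (hIsub hy) hxy]
    rw [← smul_eq_mul]
    refine Finset.card_nsmul_le_sum _ _ _ fun B hB => ?_
    rcases hsz B (hIsub hB) with h | h <;> simp [h]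
  have c2 : I.biUnion id ⊆
      P.parts.biUnion fun t => t \ {u ∈ Q.parts | u ⊆ t}.biUnion id := by
    intro x hx
    obtain ⟨B, hB, hxB⟩ := Finset.mem_biUnion.1 hx
    have hBQ := hIsub hB
    obtain ⟨t, ht, hxt⟩ := P.exists_mem (Q.subset hBQ hxB)
    refine Finset.mem_biUnion.2 ⟨t, ht, Finset.mem_sdiff.2 ⟨hxt, fun hcon => ?_⟩⟩
    obtain ⟨u, hu, hxu⟩ := Finset.mem_biUnion.1 hcon
    rw [Finset.mem_filter] at hu
    have : B = u := Q.eq_of_mem_parts hBQ hu.1 hxB hxu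
    subst this
    obtain ⟨k, rfl⟩ := hpure t ht
    refine (Finset.mem_filter.1 hB).2 fun y hy z hz => ?_
    rw [(Finset.mem_filter.1 (hu.2 hy)).2, (Finset.mem_filter.1 (hu.2 hz)).2]
  have c3 : #(P.parts.biUnion fun t => t \ {u ∈ Q.parts | u ⊆ t}.biUnion id) ≤ #P.parts * m :=
    Finset.card_biUnion_le_card_mul _ _ _ fun t ht =>
      P.card_parts_equitabilise_subset_le h ht
  have := (c1.trans (Finset.card_le_card c2)).trans c3
  exact (Nat.le_of_mul_le_mul_right this (Nat.pos_of_ne_zero hm)).trans hPc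

/-- Every part of an equipartition can be cut into `r` pieces so that the result is again an
equipartition and at most `#P₀.parts * card κ` pieces fail to be monochromatic for `f`. -/
lemma exists_split (P₀ : Finpartition (univ : Finset V)) (hP : P₀.IsEquipartition) (f : V → κ)
    {r : ℕ} (hr : 0 < r) (hk : 0 < #P₀.parts) (hn : #P₀.parts * r ≤ Fintype.card V) :
    ∃ Z : Finpartition (univ : Finset V), Z.IsEquipartition ∧ Z ≤ P₀ ∧
      #Z.parts = #P₀.parts * r ∧
      (∃ m, 0 < m ∧ ∀ B ∈ Z.parts, #B = m ∨ #B = m + 1) ∧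
      #{B ∈ Z.parts | ¬ ∀ x ∈ B, ∀ y ∈ B, f x = f y} ≤ #P₀.parts * Fintype.card κ := by
  set q := Fintype.card V / #P₀.parts with hq
  have hrq : r ≤ q := (Nat.le_div_iff_mul_le hk).2 (by rwa [mul_comm])
  set m := q / r with hm
  have m0 : 0 < m := Nat.div_pos hrq hr
  have hqr : r * m + q % r = q := Nat.div_add_mod q r
  have hqlt : q % r < r := Nat.mod_lt _ hr
  have hA : ∀ A ∈ P₀.parts, ∃ a b, a + b = r ∧ a * m + b * (m + 1) = #A := by
    intro A hA
    rcases hP.card_parts_eq_average hA with h | h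
    · refine ⟨r - q % r, q % r, by omega, ?_⟩
      rw [h, Finset.card_univ, ← hq]
      obtain ⟨a, ha⟩ : ∃ a, r = a + q % r := ⟨r - q % r, by omega⟩
      have : r - q % r = a := by omega
      rw [this]
      calc a * m + q % r * (m + 1) = (a + q % r) * m + q % r := by ring
        _ = q := by rw [← ha]; exact hqr
    · refine ⟨r - (q % r + 1), q % r + 1, by omega, ?_⟩
      rw [h, Finset.card_univ, ← hq]
      obtain ⟨a, ha⟩ : ∃ a, r = a + (q % r + 1) := ⟨r - (q % r + 1), by omega⟩
      have : r - (q % r + 1) = a := by omega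
      rw [this]
      calc a * m + (q % r + 1) * (m + 1) = (a + (q % r + 1)) * m + q % r + 1 := by ring
        _ = q + 1 := by rw [← ha]; rw [hqr]
  have hex : ∀ A (hA : A ∈ P₀.parts), ∃ Q : Finpartition A,
      (∀ B ∈ Q.parts, #B = m ∨ #B = m + 1) ∧ #Q.parts = r ∧
      #{B ∈ Q.parts | ¬ ∀ x ∈ B, ∀ y ∈ B, f x = f y} ≤ Fintype.card κ := by
    intro A hA'
    obtain ⟨a, b, hab, h⟩ := hA A hA'
    rw [← hab]
    exact exists_split_part f A m0.ne' h
  choose Q hQ1 hQ2 hQ3 using hex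
  have hsz : ∀ B ∈ (P₀.bind Q).parts, #B = m ∨ #B = m + 1 := by
    intro B hB
    obtain ⟨A, hA, hB⟩ := Finpartition.mem_bind.1 hB
    exact hQ1 A hA B hB
  refine ⟨P₀.bind Q, Set.equitableOn_iff_exists_eq_eq_add_one.2 ⟨m, fun B hB => hsz B hB⟩,
    ?_, ?_, ⟨m, m0, hsz⟩, ?_⟩
  · intro B hB
    obtain ⟨A, hA, hB⟩ := Finpartition.mem_bind.1 hB
    exact ⟨A, hA, (Q A hA).le hB⟩
  · rw [Finpartition.card_bind, Finset.sum_congr rfl fun A _ => hQ2 A.1 A.2]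
    simp
  · calc _ ≤ #(P₀.parts.attach.biUnion fun A =>
          {B ∈ (Q A.1 A.2).parts | ¬ ∀ x ∈ B, ∀ y ∈ B, f x = f y}) := by
          refine Finset.card_le_card fun B hB => ?_
          obtain ⟨hB, hB2⟩ := Finset.mem_filter.1 hB
          obtain ⟨A, hA, hB⟩ := Finpartition.mem_bind.1 hB
          exact Finset.mem_biUnion.2 ⟨⟨A, hA⟩, Finset.mem_attach _ _,
            Finset.mem_filter.2 ⟨hB, hB2⟩⟩
      _ ≤ #P₀.parts.attach * Fintype.card κ :=
          Finset.card_biUnion_le_card_mul _ _ _ fun A _ => hQ3 A.1 A.2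
      _ = _ := by simp
end Split

section Regular
variable {V : Type} [Fintype V]

lemma bot_regular [DecidableEq V] (G : SimpleGraph V) {ε : ℝ} (hε : 0 < ε) :
    IsRegularPartition G ε (⊥ : Finpartition (univ : Finset V)) := by
  have : irregCount G ε (⊥ : Finpartition (univ : Finset V)) = 0 := by
    rw [irregCount, Finset.card_eq_zero, Finset.filter_eq_empty_iff]
    rintro ⟨A, B⟩ hAB
    simp only [Finset.mem_product, Finpartition.mem_bot_iff] at hAB
    obtain ⟨⟨a, -, rfl⟩, ⟨b, -, rfl⟩⟩ := hAB
    rw [not_not]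
    intro A' hA' B' hB' h1 h2
    have key : ∀ (x : V) (S : Finset V), S ⊆ {x} → ε * (#({x} : Finset V) : ℝ) ≤ #S → S = {x} := by
      intro x S hS h
      rcases Finset.subset_singleton_iff.1 hS with rfl | rfl
      · simp at h; linarith
      · rfl
    rw [key a A' hA' h1, key b B' hB' h2]
    simpa using hε.le
  rw [IsRegularPartition, this]
  simp only [Nat.cast_zero]
  positivity

/-- An irregular pair has a member violating `p`. -/
lemma irregCount_le_of_impure [DecidableEq V] {G : SimpleGraph V} {ε : ℝ}
    {Z : Finpartition (univ : Finset V)} {p : Finset V → Prop}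
    (h : ∀ A ∈ Z.parts, ∀ B ∈ Z.parts, p A → p B → RegPair G ε A B) :
    irregCount G ε Z ≤ 2 * (#{A ∈ Z.parts | ¬ p A} * #Z.parts) := by
  rw [irregCount]
  calc _ ≤ #(({A ∈ Z.parts | ¬ p A} ×ˢ Z.parts) ∪ (Z.parts ×ˢ {A ∈ Z.parts | ¬ p A})) := by
        refine Finset.card_le_card fun ⟨A, B⟩ hAB => ?_
        simp only [Finset.mem_filter, Finset.mem_product, Finset.mem_union] at hAB ⊢
        by_contra hcon
        have := h A hAB.1.1 B hAB.1.2
        tauto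
    _ ≤ _ := (Finset.card_union_le _ _).trans (by
        rw [Finset.card_product, Finset.card_product]
        linarith)

/-- A graph close in cut norm to a function that is constant on `A ×ˢ B` is regular on that pair. -/
lemma regPair_of_cut {ε τ s : ℝ} (hε : 0 < ε) (hε1 : ε ≤ 1) {G : SimpleGraph V} {t : V × V → ℝ}
    (hcut : ∀ A B : Finset V, |∑ ω ∈ A ×ˢ B, (adjInd G ω - t ω)| ≤ τ)
    (hs : 0 < s) (hτ : τ ≤ ε ^ 3 * s ^ 2 / 2) {A B : Finset V}
    (hA : s ≤ #A) (hB : s ≤ #B) {t₀ : ℝ} (ht : ∀ ω ∈ A ×ˢ B, t ω = t₀) :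
    RegPair G ε A B := by
  have key : ∀ A' ⊆ A, ∀ B' ⊆ B, ε * #A ≤ #A' → ε * #B ≤ #B' → |dens G A' B' - t₀| ≤ ε / 2 := by
    intro A' hA' B' hB' h1 h2
    have a1 : ε * s ≤ #A' := (mul_le_mul_of_nonneg_left hA hε.le).trans h1
    have b1 : ε * s ≤ #B' := (mul_le_mul_of_nonneg_left hB hε.le).trans h2
    have es : 0 < ε * s := by positivity
    have a0 : (0 : ℝ) < #A' := es.trans_le a1
    have b0 : (0 : ℝ) < #B' := es.trans_le b1
    have hc := hcut A' B'
    have e : ∑ ω ∈ A' ×ˢ B', (adjInd G ω - t ω) = eCnt G A' B' - t₀ * (#A' * #B') := by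
      rw [Finset.sum_sub_distrib, eCnt_eq_sum, Finset.sum_congr rfl fun ω hω =>
        ht ω (Finset.product_subset_product hA' hB' hω), Finset.sum_const, Finset.card_product,
        nsmul_eq_mul]
      push_cast
      ring
    rw [e] at hc
    have e2 : dens G A' B' - t₀ = (eCnt G A' B' - t₀ * (#A' * #B')) / (#A' * #B') := by
      rw [_root_.dens]
      field_simp
    rw [e2, abs_div, abs_of_pos (mul_pos a0 b0), div_le_iff₀ (mul_pos a0 b0)]
    have := mul_le_mul a1 b1 es.le a0.le
    calc _ ≤ τ := hc
      _ ≤ ε ^ 3 * s ^ 2 / 2 := hτ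
      _ = ε / 2 * (ε * s * (ε * s)) := by ring
      _ ≤ _ := by gcongr
  intro A' hA' B' hB' h1 h2
  have k1 := key A' hA' B' hB' h1 h2
  have k2 := key A subset_rfl B subset_rfl (mul_le_of_le_one_left (Nat.cast_nonneg _) hε1)
    (mul_le_of_le_one_left (Nat.cast_nonneg _) hε1)
  rw [abs_le] at *
  constructor <;> linarith

lemma dens_top {A B : Finset V} (h : Disjoint A B) (hA : A.Nonempty) (hB : B.Nonempty) :
    dens (⊤ : SimpleGraph V) A B = 1 := by
  have e : (eCnt (⊤ : SimpleGraph V) A B : ℝ) = #A * #B := by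
    rw [eCnt_eq_sum, Finset.sum_congr rfl (g := fun _ => (1 : ℝ))]
    · simp
    · intro ω hω
      rw [Finset.mem_product] at hω
      have : ω.1 ≠ ω.2 := fun e => Finset.disjoint_left.1 h hω.1 (e ▸ hω.2)
      simp [adjInd, this]
  have := hA.card_pos
  have := hB.card_pos
  rw [_root_.dens, e]
  field_simp

/-- In a complete graph only the diagonal pairs of parts can be irregular. -/
lemma top_regular [DecidableEq V] {ε : ℝ} (hε : 0 < ε) {Z : Finpartition (univ : Finset V)}
    (hZ : 1 / ε ≤ #Z.parts) : IsRegularPartition (⊤ : SimpleGraph V) ε Z := by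
  have h : irregCount (⊤ : SimpleGraph V) ε Z ≤ #Z.parts := by
    rw [irregCount]
    refine (Finset.card_le_card (t := Z.parts.image fun A => (A, A)) ?_).trans
      Finset.card_image_le
    rintro ⟨A, B⟩ hAB
    simp only [Finset.mem_filter, Finset.mem_product] at hAB
    obtain ⟨⟨hA, hB⟩, hreg⟩ := hAB
    by_contra hne
    have hAB : A ≠ B := by
      rintro rfl
      exact hne (Finset.mem_image.2 ⟨A, hA, rfl⟩)
    have hd : Disjoint A B := Z.disjoint hA hB hAB
    refine hreg fun A' hA' B' hB' h1 h2 => ?_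
    have nA := Z.nonempty_of_mem_parts hA
    have nB := Z.nonempty_of_mem_parts hB
    have a1 : A'.Nonempty := by
      have : (0 : ℝ) < #A := by exact_mod_cast nA.card_pos
      have h : (0 : ℝ) < #A' := lt_of_lt_of_le (by positivity) h1
      rw [← Finset.card_pos]
      exact_mod_cast h
    have b1 : B'.Nonempty := by
      have : (0 : ℝ) < #B := by exact_mod_cast nB.card_pos
      have h : (0 : ℝ) < #B' := lt_of_lt_of_le (by positivity) h2
      rw [← Finset.card_pos]
      exact_mod_cast h
    rw [dens_top hd nA nB, dens_top (hd.mono hA' hB') a1 b1]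
    simpa using hε.le
  have h' : (irregCount (⊤ : SimpleGraph V) ε Z : ℝ) ≤ #Z.parts := by exact_mod_cast h
  rw [div_le_iff₀ hε] at hZ
  rw [IsRegularPartition]
  nlinarith [(Nat.cast_nonneg (#Z.parts) : (0 : ℝ) ≤ _)]
end Regular

/-! ### Tower estimates and parameters -/

section Tower

lemma one_add_le_two_rpow {x : ℝ} (hx : 1 ≤ x) : 1 + x ≤ (2 : ℝ) ^ x := by
  have := one_add_mul_self_le_rpow_one_add (s := 1) (by norm_num) hx
  norm_num at this
  linarith

lemma one_le_twrAt {y : ℝ} (hy : 1 ≤ y) (n : ℕ) : 1 ≤ twrAt y n := by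
  induction n with
  | zero => exact hy
  | succ n ih =>
    have := one_add_le_two_rpow ih
    rw [twrAt]
    linarith

lemma one_add_le_twrAt_succ {y : ℝ} (hy : 1 ≤ y) (n : ℕ) : 1 + twrAt y n ≤ twrAt y (n + 1) :=
  one_add_le_two_rpow (one_le_twrAt hy n)

lemma twrAt_mono {y : ℝ} (hy : 1 ≤ y) : Monotone (twrAt y) :=
  monotone_nat_of_le_succ fun n => by linarith [one_add_le_twrAt_succ hy n]

lemma nat_le_twrAt {y : ℝ} (hy : 1 ≤ y) (n : ℕ) : (n : ℝ) ≤ twrAt y n := by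
  induction n with
  | zero =>
    show ((0 : ℕ) : ℝ) ≤ y
    push_cast
    linarith
  | succ n ih =>
    have := one_add_le_twrAt_succ hy n
    push_cast
    linarith

lemma le_twrAt_four {y : ℝ} (hy : 1 ≤ y) : 65536 ≤ twrAt y 4 := by
  have key : ∀ {a b : ℝ}, a ≤ b → (2 : ℝ) ^ a ≤ 2 ^ b := fun h =>
    Real.rpow_le_rpow_of_exponent_le one_le_two h
  have h1 : (2 : ℝ) ≤ twrAt y 1 := by
    have := key (show (1 : ℝ) ≤ twrAt y 0 from hy)
    norm_num at this
    exact this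
  have h2 : (4 : ℝ) ≤ twrAt y 2 := by
    have := key h1
    norm_num at this
    exact this
  have h3 : (16 : ℝ) ≤ twrAt y 3 := by
    have := key h2
    norm_num at this
    exact this
  have := key h3
  norm_num at this
  exact this

/-- One exponential absorbs all polynomial losses in the argument. -/
lemma pow_le_two_rpow {y : ℝ} (hy : 4096 ≤ y) : y ^ 32 ≤ (2 : ℝ) ^ y := by
  have h1 : y ≤ (y / 64) ^ 2 := by nlinarith
  have h2 : y / 64 ≤ (2 : ℝ) ^ (y / 64) := by
    have := one_add_le_two_rpow (x := y / 64) (by linarith)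
    linarith
  calc y ^ 32 ≤ ((y / 64) ^ 2) ^ 32 := by gcongr
    _ = (y / 64) ^ 64 := by ring
    _ ≤ ((2 : ℝ) ^ (y / 64)) ^ 64 := by gcongr
    _ = (2 : ℝ) ^ y := by
      rw [← Real.rpow_natCast, ← Real.rpow_mul (by norm_num)]
      norm_num

end Tower

/-- The number of pieces into which each part of `P₀` is cut when `k` labels have to be respected;
at least `2 * k / ε`, so that the impure pieces spoil at most an `ε` proportion of the pairs. -/
noncomputable def splitNum (ε : ℝ) (k : ℕ) : ℕ := ⌈2 * (k : ℝ) / ε⌉₊ + 1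

/-- The accuracy in cut norm needed for `ε`-regularity of a partition into
`k₀ * splitNum ε k` parts. -/
noncomputable def cutErr (ε : ℝ) (k₀ k : ℕ) : ℝ :=
  ε ^ 3 / (24 * ((k₀ * splitNum ε k : ℕ) : ℝ) ^ 2)

lemma splitNum_bound {ε y : ℝ} {k₀ k : ℕ} (hε : 0 < ε) (hy : 65536 ≤ y)
    (hk₀ : (k₀ : ℝ) ≤ 1 / ε) (hey : 1 / ε ≤ y) (hk : (k : ℝ) ≤ y) :
    ((k₀ * splitNum ε k : ℕ) : ℝ) ≤ 3 * y ^ 3 := by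
  have h1 : (splitNum ε k : ℝ) ≤ 3 * y ^ 2 := by
    have c := Nat.ceil_lt_add_one (show 0 ≤ 2 * (k : ℝ) / ε by positivity)
    have : 2 * (k : ℝ) / ε ≤ 2 * y * y := by
      calc 2 * (k : ℝ) / ε = 2 * k * (1 / ε) := by ring
        _ ≤ 2 * y * y := by gcongr
    rw [splitNum]
    push_cast
    nlinarith
  push_cast
  calc (k₀ : ℝ) * splitNum ε k ≤ y * (3 * y ^ 2) := by gcongr; exact hk₀.trans hey
    _ = _ := by ring

lemma cutErr_pos {ε : ℝ} {k₀ : ℕ} (hε : 0 < ε) (h0 : 0 < k₀) (k : ℕ) : 0 < cutErr ε k₀ k := by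
  have : 0 < k₀ * splitNum ε k := Nat.mul_pos h0 (Nat.succ_pos _)
  have : (0 : ℝ) < ((k₀ * splitNum ε k : ℕ) : ℝ) := by exact_mod_cast this
  rw [cutErr]
  positivity

lemma inv_cutErr_le {ε y : ℝ} {k₀ k : ℕ} (hε : 0 < ε) (hy : 65536 ≤ y)
    (hk₀ : (k₀ : ℝ) ≤ 1 / ε) (hey : 1 / ε ≤ y) (hk : (k : ℝ) ≤ y) :
    1 / cutErr ε k₀ k ≤ 216 * y ^ 9 := by
  have hb := splitNum_bound hε hy hk₀ hey hk
  calc 1 / cutErr ε k₀ k = 24 * ((k₀ * splitNum ε k : ℕ) : ℝ) ^ 2 * (1 / ε) ^ 3 := by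
        rw [cutErr, one_div_div]; ring
    _ ≤ 24 * (3 * y ^ 3) ^ 2 * y ^ 3 := by gcongr
    _ = _ := by ring

/-- One application of weak regularity costs two exponentials. -/
lemma growth {ε y : ℝ} {k₀ k : ℕ} (hε : 0 < ε) (hy : 65536 ≤ y) (h0 : 0 < k₀)
    (hk₀ : (k₀ : ℝ) ≤ 1 / ε) (hey : 1 / ε ≤ y) (hk : (k : ℝ) ≤ y) :
    (k : ℝ) * 4 ^ ⌈1 / cutErr ε k₀ k ^ 2⌉₊ ≤ (2 : ℝ) ^ (2 : ℝ) ^ y := by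
  have hp := cutErr_pos hε h0 k
  have h1 : 1 / cutErr ε k₀ k ^ 2 ≤ 46656 * y ^ 18 := by
    calc 1 / cutErr ε k₀ k ^ 2 = (1 / cutErr ε k₀ k) ^ 2 := by ring
      _ ≤ (216 * y ^ 9) ^ 2 := by
        gcongr
        exact inv_cutErr_le hε hy hk₀ hey hk
      _ = _ := by ring
  have hN : (⌈1 / cutErr ε k₀ k ^ 2⌉₊ : ℝ) ≤ y ^ 20 := by
    have c := Nat.ceil_lt_add_one (show 0 ≤ 1 / cutErr ε k₀ k ^ 2 by positivity)
    have : (1 : ℝ) ≤ y ^ 18 := one_le_pow₀ (by linarith)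
    have : 46657 * y ^ 18 ≤ y ^ 20 := by
      have : (46657 : ℝ) ≤ y ^ 2 := by nlinarith
      calc _ ≤ y ^ 2 * y ^ 18 := by gcongr
        _ = _ := by ring
    linarith
  have hky : (k : ℝ) ≤ (2 : ℝ) ^ y := by
    have := one_add_le_two_rpow (x := y) (by linarith)
    linarith
  have hexp : y + 2 * y ^ 20 ≤ (2 : ℝ) ^ y := by
    refine le_trans ?_ (pow_le_two_rpow (by linarith))
    have h1 : y ≤ y ^ 20 := le_self_pow₀ (by linarith) (by norm_num)
    have h2 : 3 ≤ y ^ 12 := by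
      have : y ≤ y ^ 12 := le_self_pow₀ (by linarith) (by norm_num)
      linarith
    calc y + 2 * y ^ 20 ≤ 3 * y ^ 20 := by linarith
      _ ≤ y ^ 12 * y ^ 20 := by gcongr
      _ = _ := by ring
  calc (k : ℝ) * 4 ^ ⌈1 / cutErr ε k₀ k ^ 2⌉₊
      ≤ (2 : ℝ) ^ y * (2 : ℝ) ^ (2 * y ^ 20) := by
        gcongr
        rw [show (4 : ℝ) = 2 ^ (2 : ℝ) by norm_num, ← Real.rpow_natCast,
          ← Real.rpow_mul (by norm_num)]
        exact Real.rpow_le_rpow_of_exponent_le one_le_two (by linarith)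
    _ = (2 : ℝ) ^ (y + 2 * y ^ 20) := by rw [Real.rpow_add (by norm_num)]
    _ ≤ _ := Real.rpow_le_rpow_of_exponent_le one_le_two hexp

/-! ### From the tilted weight to a regular partition -/

section Finish
variable {V : Type} [Fintype V]

/-- Bounds the logarithm of the number of (signed) tests used in `exists_graph_near`. -/
lemma log_tests_le {n : ℕ} (hn : 0 < n) : Real.log (2 * ((2 ^ n * 2 ^ n + 1 : ℕ) : ℝ)) ≤ 4 * n := by
  have h1 : 2 * ((2 ^ n * 2 ^ n + 1 : ℕ) : ℝ) ≤ 4 ^ (n + 1) := by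
    have e : ((2 : ℝ) ^ n * 2 ^ n) = 4 ^ n := by rw [← mul_pow]; norm_num
    have : (1 : ℝ) ≤ 4 ^ n := one_le_pow₀ (by norm_num)
    push_cast
    rw [e, pow_succ]
    linarith
  have h2 : Real.log 4 ≤ 2 := by
    have := Real.log_two_lt_d9
    rw [show (4 : ℝ) = 2 ^ 2 by norm_num, Real.log_pow]
    norm_num
    linarith
  have hn' : (1 : ℝ) ≤ n := by exact_mod_cast hn
  calc _ ≤ Real.log (4 ^ (n + 1)) := Real.log_le_log (by positivity) h1
    _ = (n + 1) * Real.log 4 := by rw [Real.log_pow]; push_cast; rfl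
    _ ≤ (n + 1) * 2 := by gcongr
    _ ≤ _ := by linarith

/-- A symmetric weight `W` is rounded to a graph `G'` close to `W` in cut norm, whose edit distance
from `G` is almost that of `W`. The tests are all rectangles, and one further test (`none`) which
counts the changes made to `G`. -/
lemma exists_graph_near {W : V × V → ℝ} (W0 : ∀ ω, 0 ≤ W ω) (W1 : ∀ ω, W ω ≤ 1)
    (Ws : ∀ ω, W ω.swap = W ω) (G : SimpleGraph V) {y : ℝ} (hy : 65536 ≤ y)
    (hn : y ^ 32 ≤ Fintype.card V) :
    ∃ G' : SimpleGraph V,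
      ∑ ω, |adjInd G' ω - adjInd G ω| ≤
        ∑ ω, |W ω - adjInd G ω| + (Fintype.card V : ℝ) ^ 2 / y ^ 12 ∧
      ∀ A B : Finset V, |∑ ω ∈ A ×ˢ B, (adjInd G' ω - W ω)| ≤
        (Fintype.card V : ℝ) ^ 2 / y ^ 12 + Fintype.card V := by
  have y0 : 0 < y := by linarith
  set c : Option (Finset V × Finset V) → V × V → ℝ := fun j ω =>
    match j with
    | none => if G.Adj ω.1 ω.2 then -1 else 1
    | some (S, T) => if ω ∈ S ×ˢ T then 1 else 0 with hc
  have hc1 : ∀ j ω, |c j ω| ≤ 1 := by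
    rintro (_ | ⟨S, T⟩) ω <;> simp only [hc] <;> split_ifs <;> simp
  have l0 : 0 < 1 / y ^ 13 := by positivity
  have l1 : 1 / y ^ 13 ≤ 1 := by
    rw [div_le_one (by positivity)]
    exact one_le_pow₀ (by linarith)
  obtain ⟨G', hG'⟩ := graph_rounding W0 W1 Ws hc1 l0 l1
  set n := (Fintype.card V : ℝ) with hnd
  have n0 : 0 < n := lt_of_lt_of_le (by positivity) hn
  have hlog : Real.log (2 * (Fintype.card (Option (Finset V × Finset V)) : ℝ)) ≤ 4 * n := by
    have := log_tests_le (n := Fintype.card V) (by rw [hnd] at n0; exact_mod_cast n0)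
    simpa [Fintype.card_option, Fintype.card_prod, Fintype.card_finset] using this
  -- with `l = y ^ (-13)` both terms of the rounding error are far below `n² / y ^ 12`
  have herr : 2 * ((Real.log (2 * (Fintype.card (Option (Finset V × Finset V)) : ℝ)) +
      n ^ 2 * (1 / y ^ 13) ^ 2) / (1 / y ^ 13)) ≤ n ^ 2 / y ^ 12 := by
    have e1 : 8 * y ^ 26 ≤ n := by
      have : 8 ≤ y ^ 6 := by
        have : y ≤ y ^ 6 := le_self_pow₀ (by linarith) (by norm_num)
        linarith
      calc 8 * y ^ 26 ≤ y ^ 6 * y ^ 26 := by gcongr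
        _ = y ^ 32 := by ring
        _ ≤ n := hn
    calc _ ≤ 2 * ((4 * n + n ^ 2 * (1 / y ^ 13) ^ 2) / (1 / y ^ 13)) := by gcongr
      _ = (8 * y ^ 26 * n + 2 * n ^ 2) / y ^ 13 := by field_simp; ring
      _ ≤ (n * n + 2 * n ^ 2) / y ^ 13 := by gcongr
      _ = 3 * n ^ 2 / y ^ 13 := by ring
      _ ≤ y * n ^ 2 / y ^ 13 := by gcongr; linarith
      _ = _ := by field_simp
  have hG : ∀ j, |∑ ω with ω.1 ≠ ω.2, c j ω * (adjInd G' ω - W ω)| ≤ n ^ 2 / y ^ 12 :=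
    fun j => (hG' j).trans herr
  refine ⟨G', ?_, fun A B => ?_⟩
  -- `c none` is the sign of a change to `G`, so the test `none` measures the `L¹` distance
  · have h := (abs_le.1 (hG none)).2
    have e1 : ∑ ω, |adjInd G' ω - adjInd G ω| =
        ∑ ω with ω.1 ≠ ω.2, |adjInd G' ω - adjInd G ω| := by
      rw [Finset.sum_filter]
      refine Finset.sum_congr rfl fun ω _ => ?_
      split_ifs with hω
      · rfl
      · rw [not_not] at hω
        simp [adjInd, hω]
    have e2 : ∑ ω with ω.1 ≠ ω.2, |adjInd G' ω - adjInd G ω| ≤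
        ∑ ω with ω.1 ≠ ω.2, (c none ω * (adjInd G' ω - W ω) + |W ω - adjInd G ω|) := by
      refine Finset.sum_le_sum fun ω _ => ?_
      have h1 := le_abs_self (W ω - adjInd G ω)
      have h2 := neg_abs_le (W ω - adjInd G ω)
      generalize |W ω - adjInd G ω| = z at *
      simp only [hc, adjInd] at *
      by_cases a : G.Adj ω.1 ω.2 <;> by_cases b : G'.Adj ω.1 ω.2 <;>
        simp [a, b] at h1 h2 ⊢ <;> linarith
    have e3 : ∑ ω with ω.1 ≠ ω.2, |W ω - adjInd G ω| ≤ ∑ ω, |W ω - adjInd G ω| :=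
      Finset.sum_le_sum_of_subset_of_nonneg (Finset.filter_subset _ _) fun _ _ _ => abs_nonneg _
    rw [Finset.sum_add_distrib] at e2
    linarith
  · have h := hG (some (A, B))
    have e : ∑ ω ∈ A ×ˢ B, (adjInd G' ω - W ω) =
        ∑ ω with ω.1 ≠ ω.2, c (some (A, B)) ω * (adjInd G' ω - W ω) +
        ∑ ω with ¬ ω.1 ≠ ω.2, c (some (A, B)) ω * (adjInd G' ω - W ω) := by
      rw [Finset.sum_filter_add_sum_filter_not]
      simp only [hc, ite_mul, one_mul, zero_mul]
      rw [← Finset.sum_filter]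
      refine Finset.sum_congr ?_ fun _ _ => rfl
      ext ω
      simp
    have hd : |∑ ω with ¬ ω.1 ≠ ω.2, c (some (A, B)) ω * (adjInd G' ω - W ω)| ≤ n := by
      refine (Finset.abs_sum_le_sum_abs _ _).trans ?_
      have hcard : #({ω : V × V | ¬ ω.1 ≠ ω.2} : Finset (V × V)) ≤ Fintype.card V := by
        rw [← Finset.card_univ (α := V)]
        refine (Finset.card_le_card (t := univ.image fun x => (x, x)) ?_).trans
          Finset.card_image_le
        rintro ⟨a, b⟩ hab
        simp at hab
        simp [hab]
      calc _ ≤ ∑ ω : V × V with ¬ ω.1 ≠ ω.2, (1 : ℝ) := by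
            refine Finset.sum_le_sum fun ω hω => ?_
            have hω : ω.1 = ω.2 := by simpa using hω
            have a0 : adjInd G' ω = 0 := by simp [adjInd, hω]
            rw [abs_mul, a0, zero_sub, abs_neg, abs_of_nonneg (W0 ω)]
            exact mul_le_one₀ (hc1 (some (A, B)) ω) (W0 ω) (W1 ω)
        _ ≤ n := by
            rw [Finset.sum_const, nsmul_eq_mul, mul_one, hnd]
            exact_mod_cast hcard
    rw [e]
    exact (abs_add_le _ _).trans (add_le_add h hd)

/-- From the weight supplied by `exists_tilt` to the graph and its regular partition: `W` is
rounded to a graph and `P₀` is split so that most parts lie inside a class of `f`. -/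
lemma exists_regular_of_tilt {κ : Type} [DecidableEq V] [Fintype κ] {ε δ p y : ℝ}
    (hε : 0 < ε) (hε1 : ε ≤ 1) (hδ : 0 < δ)
    (hp : 0 < p) {G : SimpleGraph V} (hG : p * (Fintype.card V : ℝ) ^ 2 ≤ ∑ ω, adjInd G ω)
    {P₀ : Finpartition (univ : Finset V)} (hP : P₀.IsEquipartition) (h0 : 0 < #P₀.parts)
    (hk₀ : (#P₀.parts : ℝ) ≤ 1 / ε) (hy : 65536 ≤ y) (hey : 1 / ε ≤ y) (hdy : 1 / δ ≤ y)
    (hpy : 1 / p ≤ y) (hn : y ^ 32 ≤ Fintype.card V)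
    {f : V → κ} (hκ : (Fintype.card κ : ℝ) ≤ y)
    {W : V × V → ℝ} (W0 : ∀ ω, 0 ≤ W ω) (W1 : ∀ ω, W ω ≤ 1) (Ws : ∀ ω, W ω.swap = W ω)
    (hW : ∑ ω, |W ω - adjInd G ω| ≤ δ / 2 * ∑ ω, adjInd G ω)
    (hcut : ∀ A B : Finset V, |∑ ω ∈ A ×ˢ B, (W ω - avg (cell f) (adjInd G) ω)| ≤
      cutErr ε #P₀.parts (Fintype.card κ) * Fintype.card (V × V)) :
    ∃ G' : SimpleGraph V,
      ((symmDiff G.edgeSet G'.edgeSet).ncard : ℝ) ≤ δ * G.edgeSet.ncard ∧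
      ∃ Z : Finpartition (univ : Finset V), Z.IsEquipartition ∧ Z ≤ P₀ ∧
        IsRegularPartition G' ε Z ∧ (#Z.parts : ℝ) ≤ 3 * y ^ 3 := by
  have y0 : 0 < y := by linarith
  obtain ⟨G', hE, hC⟩ := exists_graph_near W0 W1 Ws G hy hn
  set n := (Fintype.card V : ℝ) with hnd
  have n0 : 0 < n := lt_of_lt_of_le (by positivity) hn
  refine ⟨G', ?_, ?_⟩
  · have h1 := ncard_symmDiff_edgeSet G G'
    have h2 := sum_adjInd G
    have h3 : n ^ 2 / y ^ 12 ≤ δ / 2 * ∑ ω, adjInd G ω := by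
      rw [div_le_iff₀ hδ] at hdy
      rw [div_le_iff₀ hp] at hpy
      have : 1 ≤ δ * p * y ^ 2 := by nlinarith
      have hy2 : 2 ≤ y ^ 10 := by
        have : y ≤ y ^ 10 := le_self_pow₀ (by linarith) (by norm_num)
        linarith
      calc n ^ 2 / y ^ 12 ≤ δ / 2 * (p * n ^ 2) := by
            rw [div_le_iff₀ (by positivity)]
            calc n ^ 2 = 1 / 2 * 1 * 2 * n ^ 2 := by ring
              _ ≤ 1 / 2 * (δ * p * y ^ 2) * y ^ 10 * n ^ 2 := by gcongr
              _ = _ := by ring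
        _ ≤ _ := by gcongr
    have h4 : 2 * ((symmDiff G.edgeSet G'.edgeSet).ncard : ℝ) ≤ δ * ∑ ω, adjInd G ω := by
      rw [h1]; linarith
    rw [h2] at h4
    linarith
  · set r := splitNum ε (Fintype.card κ) with hr
    set K : ℕ := #P₀.parts * r with hK
    have r0 : 0 < r := Nat.succ_pos _
    have hKy : (K : ℝ) ≤ 3 * y ^ 3 := splitNum_bound hε hy hk₀ hey hκ
    have K0 : (0 : ℝ) < K := by exact_mod_cast Nat.mul_pos h0 r0
    have hKn : K ≤ Fintype.card V := by
      have : 3 * y ^ 3 ≤ y ^ 32 := by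
        have : 3 ≤ y ^ 29 := by
          have : y ≤ y ^ 29 := le_self_pow₀ (by linarith) (by norm_num)
          linarith
        calc _ ≤ y ^ 29 * y ^ 3 := by gcongr
          _ = _ := by ring
      have : (K : ℝ) ≤ Fintype.card V := by linarith
      exact_mod_cast this
    obtain ⟨Z, hZe, hZP, hZc, ⟨m, m0, hm⟩, hZi⟩ := exists_split P₀ hP f r0 h0 hKn
    refine ⟨Z, hZe, hZP, ?_, by rw [hZc]; exact hKy⟩
    have m1 : (1 : ℝ) ≤ m := by exact_mod_cast m0
    have hnK : n ≤ 2 * K * m := by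
      have : Fintype.card V ≤ K * (m + 1) := by
        rw [← Finset.card_univ, ← Z.sum_card_parts, hK, ← hZc, ← smul_eq_mul]
        refine Finset.sum_le_card_nsmul _ _ _ fun B hB => ?_
        rcases hm B hB with h | h <;> omega
      have : n ≤ K * (m + 1) := by rw [hnd]; exact_mod_cast this
      nlinarith
    set τ := ε ^ 3 * n ^ 2 / (8 * (K : ℝ) ^ 2) with hτ
    have hcut' : ∀ A B : Finset V,
        |∑ ω ∈ A ×ˢ B, (adjInd G' ω - avg (cell f) (adjInd G) ω)| ≤ τ := by
      intro A B
      have e : ∑ ω ∈ A ×ˢ B, (adjInd G' ω - avg (cell f) (adjInd G) ω) =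
          ∑ ω ∈ A ×ˢ B, (adjInd G' ω - W ω) +
          ∑ ω ∈ A ×ˢ B, (W ω - avg (cell f) (adjInd G) ω) := by
        rw [← Finset.sum_add_distrib]
        exact Finset.sum_congr rfl fun _ _ => by ring
      have i := inv_cutErr_le hε hy hk₀ hey hκ
      have hc : cutErr ε #P₀.parts (Fintype.card κ) = ε ^ 3 / (24 * (K : ℝ) ^ 2) := rfl
      have cp := cutErr_pos hε h0 (Fintype.card κ)
      rw [div_le_iff₀ cp] at i
      set η := cutErr ε #P₀.parts (Fintype.card κ) with hη
      have hτη : τ = 3 * (η * n ^ 2) := by rw [hτ, hc]; field_simp; norm_num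
      have a1 : n ^ 2 / y ^ 12 ≤ η * n ^ 2 := by
        rw [div_le_iff₀ (by positivity)]
        have : 216 ≤ y ^ 3 := by
          have : y ≤ y ^ 3 := le_self_pow₀ (by linarith) (by norm_num)
          linarith
        calc n ^ 2 = 1 * n ^ 2 := by ring
          _ ≤ 216 * y ^ 9 * η * n ^ 2 := by gcongr
          _ ≤ y ^ 3 * y ^ 9 * η * n ^ 2 := by gcongr
          _ = _ := by ring
      have a2 : n ≤ n ^ 2 / y ^ 12 := by
        rw [le_div_iff₀ (by positivity), sq]
        gcongr
        exact le_trans (pow_le_pow_right₀ (by linarith) (by norm_num)) hn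
      have h1 := hC A B
      have h2 := hcut A B
      rw [Fintype.card_prod] at h2
      push_cast at h2
      rw [e, hτη]
      refine (abs_add_le _ _).trans ?_
      rw [← hnd, ← sq] at h2
      linarith
    have hτm : τ ≤ ε ^ 3 * (m : ℝ) ^ 2 / 2 := by
      rw [hτ, div_le_iff₀ (by positivity)]
      calc ε ^ 3 * n ^ 2 ≤ ε ^ 3 * (2 * K * m) ^ 2 := by gcongr
        _ = _ := by ring
    have hreg : ∀ A ∈ Z.parts, ∀ B ∈ Z.parts, (∀ x ∈ A, ∀ y ∈ A, f x = f y) →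
        (∀ x ∈ B, ∀ y ∈ B, f x = f y) → RegPair G' ε A B := by
      intro A hA B hB pA pB
      obtain ⟨a, ha⟩ := Z.nonempty_of_mem_parts hA
      obtain ⟨b, hb⟩ := Z.nonempty_of_mem_parts hB
      refine regPair_of_cut hε hε1 hcut' (s := m) (by linarith) hτm ?_ ?_
        (t₀ := avg (cell f) (adjInd G) (a, b)) ?_
      · rcases hm A hA with h | h <;> simp [h]
      · rcases hm B hB with h | h <;> simp [h]
      · intro ω hω
        rw [Finset.mem_product] at hω
        refine avg_congr ?_
        simp [cell, pA _ hω.1 _ ha, pB _ hω.2 _ hb]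
    have hirr := irregCount_le_of_impure hreg
    have h1 : irregCount G' ε Z ≤ 2 * (#P₀.parts * Fintype.card κ * K) := by
      refine hirr.trans ?_
      rw [hZc]
      gcongr
      refine (Finset.card_le_card fun x hx => ?_).trans hZi
      simpa using hx
    have h2 : (irregCount G' ε Z : ℝ) ≤ 2 * (#P₀.parts * Fintype.card κ * K) := by
      exact_mod_cast h1
    rw [IsRegularPartition, hZc]
    refine h2.trans ?_
    have h3 : 2 * (Fintype.card κ : ℝ) ≤ ε * r := by
      have := Nat.le_ceil (2 * (Fintype.card κ : ℝ) / ε)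
      rw [div_le_iff₀ hε] at this
      rw [hr, splitNum]
      push_cast
      nlinarith
    calc 2 * ((#P₀.parts : ℝ) * Fintype.card κ * K) =
          #P₀.parts * (2 * Fintype.card κ) * K := by ring
      _ ≤ #P₀.parts * (ε * r) * K := by gcongr
      _ = ε * (K : ℝ) ^ 2 := by rw [hK]; push_cast; ring

end Finish

/-! ### The three cases -/

section Main
variable {V : Type} [Fintype V] [DecidableEq V]

/-- For the complete graph any equipartition refining `P₀` with at least `1 / ε` parts works,
and one with at most `2 ^ (1 / ε)` parts is available. -/
lemma exists_partition_top {ε : ℝ} (hε : 0 < ε) (hε1 : ε ≤ 1)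
    {P₀ : Finpartition (univ : Finset V)} (hP : P₀.IsEquipartition) (h0 : 0 < #P₀.parts)
    (hk₀ : (#P₀.parts : ℝ) ≤ 1 / ε) {H : ℕ} (hH : 1 ≤ H)
    (hn : twrAt (1 / ε) H < Fintype.card V) :
    ∃ Z : Finpartition (univ : Finset V), Z.IsEquipartition ∧ Z ≤ P₀ ∧
      IsRegularPartition (⊤ : SimpleGraph V) ε Z ∧ (#Z.parts : ℝ) ≤ twrAt (1 / ε) H := by
  have x1 : 1 ≤ 1 / ε := by rw [le_div_iff₀ hε]; linarith
  set x := 1 / ε with hx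
  set k₀ := #P₀.parts with hk
  have k0 : (1 : ℝ) ≤ k₀ := by exact_mod_cast h0
  set r := ⌈x / k₀⌉₊ with hr
  have r0 : 0 < r := Nat.ceil_pos.2 (by positivity)
  have hlow : x ≤ k₀ * r := by
    have := Nat.le_ceil (x / k₀)
    rw [div_le_iff₀ (by linarith)] at this
    linarith
  have hup : (k₀ : ℝ) * r ≤ 2 ^ x := by
    have hlt : (k₀ : ℝ) * r ≤ x + k₀ := by
      have := (Nat.ceil_lt_add_one (show 0 ≤ x / k₀ by positivity)).le
      calc (k₀ : ℝ) * r ≤ k₀ * (x / k₀ + 1) := by gcongr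
        _ = x + k₀ := by field_simp
    rcases Nat.lt_or_ge 1 k₀ with h | h
    · have k2 : (2 : ℝ) ≤ k₀ := by exact_mod_cast h
      have := one_add_le_two_rpow (x := x - 1) (by linarith)
      have e : (2 : ℝ) ^ x = 2 * 2 ^ (x - 1) := by
        rw [Real.rpow_sub_one (by norm_num)]; ring
      linarith
    · have k1 : (k₀ : ℝ) = 1 := by
        have : k₀ = 1 := by omega
        exact_mod_cast this
      have := one_add_le_two_rpow x1
      linarith
  have htw : (k₀ : ℝ) * r ≤ twrAt x H := hup.trans (twrAt_mono x1 hH)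
  have hKn : k₀ * r ≤ Fintype.card V := by
    have : (k₀ : ℝ) * r ≤ Fintype.card V := by linarith
    exact_mod_cast this
  obtain ⟨Z, h1, h2, h3, -, -⟩ := exists_split P₀ hP (fun _ => ()) r0 h0 hKn
  refine ⟨Z, h1, h2, top_regular hε ?_, ?_⟩ <;> rw [h3] <;> push_cast
  · exact hlow
  · exact htw

/-- The main case. The bound on `p` ensures that `log (1 / p) / δ²` is at least `1 / (2 δ)`,
so that the tower dominates `1 / δ` and `1 / p`. -/
lemma exists_approx {ε δ p : ℝ} (hε : 0 < ε) (hε1 : ε ≤ 1) (hδ : 0 < δ) (hδ1 : δ ≤ 1)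
    (hp : 0 < p) (hpδ : p * (1 + δ) ≤ 1) {G : SimpleGraph V}
    (hG : p * (Fintype.card V : ℝ) ^ 2 ≤ ∑ ω, adjInd G ω)
    {P₀ : Finpartition (univ : Finset V)} (hP : P₀.IsEquipartition) (h0 : 0 < #P₀.parts)
    (hk₀ : (#P₀.parts : ℝ) ≤ 1 / ε)
    (hn : twrAt (1 / ε) ⌈100 * Real.log (1 / p) / δ ^ 2⌉₊ < Fintype.card V) :
    ∃ G' : SimpleGraph V,
      ((symmDiff G.edgeSet G'.edgeSet).ncard : ℝ) ≤ δ * G.edgeSet.ncard ∧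
      ∃ Z : Finpartition (univ : Finset V), Z.IsEquipartition ∧ Z ≤ P₀ ∧
        IsRegularPartition G' ε Z ∧
        (#Z.parts : ℝ) ≤ twrAt (1 / ε) ⌈100 * Real.log (1 / p) / δ ^ 2⌉₊ := by
  have x1 : 1 ≤ 1 / ε := by rw [le_div_iff₀ hε]; linarith
  set x := 1 / ε with hx
  set H := ⌈100 * Real.log (1 / p) / δ ^ 2⌉₊ with hH
  set L := Real.log (1 / p) / δ ^ 2 with hL
  have hlog : δ / 2 ≤ Real.log (1 / p) := by
    have h1 : 1 + δ ≤ 1 / p := by rw [le_div_iff₀ hp]; linarith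
    have h2 : δ / 2 ≤ Real.log (1 + δ) := by
      have := Real.one_sub_inv_le_log_of_pos (show 0 < 1 + δ by linarith)
      have : δ / 2 ≤ 1 - (1 + δ)⁻¹ := by
        have e : 1 - (1 + δ)⁻¹ = δ / (1 + δ) := by field_simp; ring
        rw [e]
        gcongr
        linarith
      linarith
    exact h2.trans (Real.log_le_log (by linarith) h1)
  have hLδ : 1 / δ ≤ 2 * L := by
    rw [hL, div_le_iff₀ hδ, show 2 * (Real.log (1 / p) / δ ^ 2) * δ = 2 * Real.log (1 / p) / δ by
      field_simp, le_div_iff₀ hδ]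
    linarith
  have hL2 : 1 / 2 ≤ L := by
    have : 1 ≤ 1 / δ := by rw [le_div_iff₀ hδ]; linarith
    linarith
  have hLp : Real.log (1 / p) = L * δ ^ 2 := by rw [hL]; field_simp
  set n := (Fintype.card V : ℝ) with hnd
  have n0 : 0 < n := by linarith [one_le_twrAt x1 H]
  set M := ∑ ω, adjInd G ω with hM
  have M0 : 0 < M := lt_of_lt_of_le (by positivity) hG
  -- each step may gain `θ = M δ² / 16`, and the total gain is at most `M log (1 / p) = M L δ²`
  set T := ⌊16 * L⌋₊ + 1 with hT
  have hT1 : 16 * L < T := by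
    rw [hT]; push_cast; exact Nat.lt_floor_add_one _
  have hT2 : (T : ℝ) ≤ 18 * L := by
    have := Nat.floor_le (show 0 ≤ 16 * L by linarith)
    rw [hT]; push_cast; linarith
  set Y : ℕ → ℝ := fun i => twrAt x (4 + 2 * i) with hY
  have hY4 : ∀ i, 65536 ≤ Y i := fun i =>
    (le_twrAt_four x1).trans (twrAt_mono x1 (by omega))
  have hYx : ∀ i, x ≤ Y i := fun i => twrAt_mono x1 (Nat.zero_le _)
  have hTθ : -(M * Real.log (M / Fintype.card (V × V))) < T * (M * δ ^ 2 / 16) := by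
    have hc : (Fintype.card (V × V) : ℝ) = n ^ 2 := by
      rw [Fintype.card_prod]; push_cast; rw [hnd]; ring
    have h1 : Real.log p ≤ Real.log (M / Fintype.card (V × V)) := by
      refine Real.log_le_log hp ?_
      rw [hc, le_div_iff₀ (by positivity)]
      exact hG
    have h2 : Real.log (1 / p) = -Real.log p := by rw [one_div, Real.log_inv]
    have h3 : M * (L * δ ^ 2) < T * (M * δ ^ 2 / 16) := by
      have : 0 < M * δ ^ 2 := by positivity
      nlinarith
    nlinarith
  obtain ⟨ι, _, f, W, hι, W0, W1, Ws, hW, hcut⟩ := exists_tilt (F := adjInd G)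
    (fun ω => by unfold adjInd; split_ifs <;> simp)
    (fun ω => by unfold adjInd; split_ifs <;> simp)
    (fun ω => by simp [adjInd, G.adj_comm]) (Y := Y) (by linarith [hY4 0])
    (fun i j hij => twrAt_mono x1 (by omega)) (η := cutErr ε #P₀.parts)
    (fun k => cutErr_pos hε h0 k)
    (fun k i hk => growth hε (hY4 i) h0 hk₀ (hYx i) hk) hTθ
  have h2L : (2 : ℝ) ^ (2 * L) ≤ Y T := by
    have : (2 : ℝ) ^ (2 * L) ≤ 2 ^ twrAt x (3 + 2 * T) := by
      refine Real.rpow_le_rpow_of_exponent_le one_le_two ?_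
      have := nat_le_twrAt x1 (3 + 2 * T)
      push_cast at this
      linarith
    have e : Y T = 2 ^ twrAt x (3 + 2 * T) := by
      simp only [hY]
      rw [show 4 + 2 * T = (3 + 2 * T) + 1 by ring, twrAt]
    rwa [e]
  have hdy : 1 / δ ≤ Y T := by
    have := one_add_le_two_rpow (x := 2 * L) (by linarith)
    linarith
  have hpy : 1 / p ≤ Y T := by
    refine le_trans ?_ h2L
    have h2 := Real.log_two_gt_d9
    have hδ2 : δ ^ 2 ≤ 1 := pow_le_one₀ hδ.le hδ1
    rw [← Real.log_le_log_iff (by positivity) (by positivity), Real.log_rpow (by norm_num), hLp]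
    nlinarith
  have hHT : 4 + 2 * T + 1 ≤ H := by
    have h1 : 100 * L ≤ H := by
      have := Nat.le_ceil (100 * Real.log (1 / p) / δ ^ 2)
      rw [← hH] at this
      rw [hL, ← mul_div_assoc]
      exact this
    have : ((4 + 2 * T + 1 : ℕ) : ℝ) ≤ H := by push_cast; linarith
    exact_mod_cast this
  have h32 : Y T ^ 32 ≤ twrAt x H :=
    (pow_le_two_rpow (by linarith [hY4 T])).trans (twrAt_mono x1 hHT)
  have hW' : ∑ ω, |W ω - adjInd G ω| ≤ δ / 2 * M := by
    refine abs_le_of_sq_le_sq' ?_ (by positivity) |>.2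
    refine hW.trans_eq ?_
    rw [← hM]; ring
  obtain ⟨G', h1, Z, h2, h3, h4, h5⟩ := exists_regular_of_tilt hε hε1 hδ hp hG
    hP h0 hk₀ (hY4 T) (hYx T) hdy hpy (h32.trans hn.le) hι W0 W1 Ws hW' hcut
  refine ⟨G', h1, Z, h2, h3, h4, h5.trans (le_trans ?_ h32)⟩
  have y4 := hY4 T
  have : Y T ≤ Y T ^ 29 := le_self_pow₀ (by linarith) (by norm_num)
  calc 3 * Y T ^ 3 ≤ Y T ^ 29 * Y T ^ 3 := by gcongr; linarith
    _ = _ := by ring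

end Main

/-- **Upper bound for the sparse regular approximation lemma (SRAL).**
There is an absolute constant `c > 0` such that for all `ε, δ, p ∈ (0,1]`: if `G` has density
at least `p` and `P₀` is an equipartition of `V(G)` of order at most `1/ε`, then one can
add/remove at most `δ|E(G)|` edges of `G` so that the resulting graph `G'` has an `ε`-regular
equipartition refining `P₀` of order at most `twr_{1/ε}(c·log(1/p)/δ²)`. -/
theorem sral_upper_bound :
    ∃ c : ℝ, 0 < c ∧
      ∀ ε δ p : ℝ, ε ∈ Set.Ioc (0 : ℝ) 1 → δ ∈ Set.Ioc (0 : ℝ) 1 → p ∈ Set.Ioc (0 : ℝ) 1 →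
      ∀ (V : Type) (_ : Fintype V) (_ : DecidableEq V) (G : SimpleGraph V),
        p ≤ graphDensity G →
        ∀ P₀ : Finpartition (univ : Finset V), P₀.IsEquipartition →
          (P₀.parts.card : ℝ) ≤ 1 / ε →
        ∃ G' : SimpleGraph V,
          ((symmDiff G.edgeSet G'.edgeSet).ncard : ℝ) ≤ δ * G.edgeSet.ncard ∧
          ∃ Z : Finpartition (univ : Finset V), Z.IsEquipartition ∧ Z ≤ P₀ ∧
            IsRegularPartition G' ε Z ∧
            (Z.parts.card : ℝ) ≤ twrAt (1 / ε) ⌈c * Real.log (1 / p) / δ ^ 2⌉₊ := by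
  refine ⟨100, by norm_num, ?_⟩
  rintro ε δ p ⟨hε, hε1⟩ ⟨hδ, hδ1⟩ ⟨hp, hp1⟩ V _ _ G hG P₀ hP hk₀
  have hcard : 0 < Fintype.card V := by
    rcases Nat.eq_zero_or_pos (Fintype.card V) with h | h
    · rw [graphDensity, h] at hG
      norm_num at hG
      linarith
    · exact h
  have n0 : (0 : ℝ) < Fintype.card V := by exact_mod_cast hcard
  have hGM : p * (Fintype.card V : ℝ) ^ 2 ≤ ∑ ω, adjInd G ω := by
    rw [sum_adjInd]
    rwa [graphDensity, le_div_iff₀ (by positivity)] at hG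
  have h0 : 0 < #P₀.parts := by
    rw [Finset.card_pos]
    obtain ⟨v⟩ := Fintype.card_pos_iff.1 hcard
    obtain ⟨A, hA, -⟩ := P₀.exists_mem (Finset.mem_univ v)
    exact ⟨A, hA⟩
  rcases le_or_gt (Fintype.card V : ℝ) (twrAt (1 / ε) ⌈100 * Real.log (1 / p) / δ ^ 2⌉₊) with
    hn | hn
  -- few vertices: the partition into singletons
  · refine ⟨G, ?_, ⊥, Finpartition.bot_isEquipartition _, bot_le, bot_regular G hε, ?_⟩
    · simp only [symmDiff_self, Set.bot_eq_empty, Set.ncard_empty, Nat.cast_zero]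
      positivity
    · rw [Finpartition.card_bot, Finset.card_univ]
      exact hn
  have htop : ∑ ω, adjInd (⊤ : SimpleGraph V) ω < (Fintype.card V : ℝ) ^ 2 := by
    obtain ⟨v⟩ := Fintype.card_pos_iff.1 hcard
    calc ∑ ω, adjInd (⊤ : SimpleGraph V) ω < ∑ ω : V × V, (1 : ℝ) := by
          refine Finset.sum_lt_sum (fun ω _ => by unfold adjInd; split_ifs <;> simp)
            ⟨(v, v), Finset.mem_univ _, by simp [adjInd]⟩
      _ = _ := by simp [sq]
  have hmono : ∀ ω, adjInd G ω ≤ adjInd (⊤ : SimpleGraph V) ω := by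
    intro ω
    by_cases h : G.Adj ω.1 ω.2
    · simp [adjInd, h, h.ne]
    · simp only [adjInd, h, if_false]
      split_ifs <;> simp
  by_cases hd : ((symmDiff G.edgeSet (⊤ : SimpleGraph V).edgeSet).ncard : ℝ) ≤
      δ * G.edgeSet.ncard
  -- `G` is nearly complete: replace it by the complete graph
  · have hp' : p < 1 := by
      have := Finset.sum_le_sum fun ω (_ : ω ∈ (univ : Finset (V × V))) => hmono ω
      have : p * (Fintype.card V : ℝ) ^ 2 < 1 * (Fintype.card V : ℝ) ^ 2 := by linarith
      exact lt_of_mul_lt_mul_right this (by positivity)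
    have hH : 1 ≤ ⌈100 * Real.log (1 / p) / δ ^ 2⌉₊ := by
      rw [Nat.one_le_ceil_iff]
      have : 0 < Real.log (1 / p) := Real.log_pos (by rw [lt_div_iff₀ hp]; linarith)
      positivity
    exact ⟨⊤, hd, exists_partition_top hε hε1 hP h0 hk₀ hH hn⟩
  -- otherwise `G` is bounded away from being complete
  · refine exists_approx hε hε1 hδ hδ1 hp ?_ hGM hP h0 hk₀ hn
    rw [not_le] at hd
    have h1 := ncard_symmDiff_edgeSet G (⊤ : SimpleGraph V)
    rw [Finset.sum_congr rfl fun ω _ => abs_of_nonneg (sub_nonneg.2 (hmono ω)),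
      Finset.sum_sub_distrib] at h1
    have h2 := sum_adjInd G
    have h3 : p * (1 + δ) * (Fintype.card V : ℝ) ^ 2 ≤ 1 * (Fintype.card V : ℝ) ^ 2 := by
      nlinarith
    exact le_of_mul_le_mul_right h3 (by positivity)
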